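/- arXiv:2512.12126 — 3 statements merged into one kernel-verified Lean document; each statement's English description precedes it below -/
import Mathlib

section
/- Let n, m be nonzero integers and let g ∈ SL(2,ℂ) with tr(g) ≠ 2 and tr(g) ≠ −2. Let S = {(x,y) ∈ SL(2,ℂ)² : xⁿ·yᵐ·x⁻ⁿ·y⁻ᵐ = g} and let O(S) be its coordinate ring. Then every locally nilpotent ℂ-derivation of O(S) is zero; that is, the Makar-Limanov invariant ML(S) equals O(S), so S admits no nontrivial actions of the additive group ℂ⁺. -/
set_option synthInstance.maxHeartbeats 1000000
set_option maxHeartbeats 1000000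

open Matrix

abbrev SL2C := Matrix.SpecialLinearGroup (Fin 2) ℂ

noncomputable def tr2 (x : SL2C) : ℂ := Matrix.trace (x : Matrix (Fin 2) (Fin 2) ℂ)

/-- The solution set `S = {(x,y) ∈ SL(2,ℂ)² : xⁿ yᵐ x⁻ⁿ y⁻ᵐ = g}`. -/
def solSet (n m : ℤ) (g : SL2C) : Set (SL2C × SL2C) :=
  {p | p.1 ^ n * p.2 ^ m * p.1 ^ (-n) * p.2 ^ (-m) = g}

/-- The coordinate ring `O(S)`: the `ℂ`-subalgebra of functions `S → ℂ` generated by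
the eight matrix-entry functions, i.e. the restrictions to `S` of polynomial functions
in the eight matrix entries. -/
noncomputable def coordRing (n m : ℤ) (g : SL2C) : Subalgebra ℂ (solSet n m g → ℂ) :=
  Algebra.adjoin ℂ
    ((Set.range fun q : Fin 2 × Fin 2 => fun p : solSet n m g =>
        ((p : SL2C × SL2C).1 : Matrix (Fin 2) (Fin 2) ℂ) q.1 q.2) ∪
     (Set.range fun q : Fin 2 × Fin 2 => fun p : solSet n m g =>
        ((p : SL2C × SL2C).2 : Matrix (Fin 2) (Fin 2) ℂ) q.1 q.2))

/-!
Exponentiating a locally nilpotent derivation of `O(S)` at a point of `S` gives a polynomial curve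
through that point, that is, matrices `x, y ∈ SL(2, ℂ[t])` with `⁅xⁿ, yᵐ⁆ = g`; it has to be shown
that this curve is constant for a dense set of points.

By Fricke's identity the traces `X, Y, Z` of `a = xⁿ`, `b = yᵐ` and `ab` satisfy the Markov-type
equation `X² + Y² + Z² - XYZ = tr g + 2`. Nielsen transformations of `(a, b)` preserve it, and
replacing the trace of largest degree by its Vieta conjugate lowers the total degree, so some
Nielsen transform has a constant trace `Y = η`. What remains is a conic in `X, Z`, which splits into
two lines, so that `X` and `Z` are constant too unless `η² = tr g + 2` or `η² = 4`. As `g` has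
distinct eigenvalues, constant traces force constant matrices `a` and `b`, and then `x` and `y` are
constant since an `n`-th power determines its root up to Chebyshev polynomials of the trace.

The exceptional values of `η` only occur on a countable union of nowhere dense closed subsets of
`S`: if the trace of a word took finitely many values near a point, multiplying `b` by elements of
the centralizer of `a` would force `Y = Z = 0` and `X² = tr g + 2`, and a rotated pair then gives
`X = 0`. Baire's theorem provides the dense set of points.
-/

open Polynomial Filter Topology
open Finset.HasAntidiagonal (antidiagonal mem_antidiagonal)
open scoped MatrixGroups commutatorElement

section LocallyNilpotent

variable {R A K : Type*} [CommRing R] [CommRing A] [Algebra R A] [Field K]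

/-- Local nilpotency of a derivation: every element is killed by some iterate. -/
def IsLocallyNilpotent (D : Derivation R A A) : Prop :=
  ∀ a : A, ∃ k : ℕ, D^[k] a = 0

theorem iterate_derivation_mul (D : Derivation R A A) (a b : A) (k : ℕ) :
    D^[k] (a * b) =
      ∑ ij ∈ antidiagonal k, (k.choose ij.1 : A) * (D^[ij.1] a * D^[ij.2] b) := by
  induction k with
  | zero => simp
  | succ k ih =>
    rw [Function.iterate_succ_apply', ih, map_sum, Finset.sum_antidiagonal_choose_succ_mul
      (fun i j => D^[i] a * D^[j] b), ← Finset.sum_add_distrib]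
    refine Finset.sum_congr rfl fun ⟨i, j⟩ hij => ?_
    have hchoose : k.choose j = k.choose i :=
      (Nat.choose_symm_of_eq_add (mem_antidiagonal.1 hij).symm).symm
    simp only [Derivation.leibniz, Derivation.map_natCast, smul_eq_mul,
      Function.iterate_succ_apply', hchoose]
    ring

theorem iterate_derivation_mul_div_factorial [CharZero K] (D : Derivation R A A)
    (ι : A →+* K) (a b : A) (k : ℕ) :
    ι (D^[k] (a * b)) / k.factorial = ∑ ij ∈ antidiagonal k,
      ι (D^[ij.1] a) / ij.1.factorial * (ι (D^[ij.2] b) / ij.2.factorial) := by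
  rw [iterate_derivation_mul, map_sum, Finset.sum_div]
  refine Finset.sum_congr rfl fun ⟨i, j⟩ hij => ?_
  obtain rfl : i + j = k := mem_antidiagonal.1 hij
  have hfac (l : ℕ) : (l.factorial : K) ≠ 0 := Nat.cast_ne_zero.2 l.factorial_ne_zero
  simp only [map_mul, map_natCast, Nat.cast_add_choose]
  field_simp [hfac]

theorem IsLocallyNilpotent.exists_polynomial {D : Derivation R A A} (hD : IsLocallyNilpotent D)
    (ι : A →+* K) (a : A) :
    ∃ p : K[X], ∀ k, p.coeff k = ι (D^[k] a) / k.factorial := by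
  obtain ⟨N, hN⟩ := hD a
  refine ⟨∑ k ∈ Finset.range N, monomial k (ι (D^[k] a) / k.factorial), fun k => ?_⟩
  simp only [finsetSum_coeff, coeff_monomial, Finset.sum_ite_eq', Finset.mem_range]
  split_ifs with h
  · rfl
  · obtain ⟨l, rfl⟩ := Nat.exists_eq_add_of_le' (not_lt.1 h)
    rw [Function.iterate_add_apply, hN, Function.iterate_fixed (map_zero D), map_zero, zero_div]

/-- The exponential of a locally nilpotent derivation `D`, followed by `ι`: geometrically, the
orbit of the point `ι` under the action of the additive group generated by `D`. -/
noncomputable def IsLocallyNilpotent.orbitMap [CharZero K] {D : Derivation R A A}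
    (hD : IsLocallyNilpotent D) (ι : A →+* K) : A →+* K[X] where
  toFun a := (hD.exists_polynomial ι a).choose
  map_zero' := by
    ext k
    rw [(hD.exists_polynomial ι 0).choose_spec, Function.iterate_fixed (map_zero D)]
    simp
  map_one' := by
    ext (_ | k)
    · simp [(hD.exists_polynomial ι 1).choose_spec]
    · simp [(hD.exists_polynomial ι 1).choose_spec, Function.iterate_fixed (map_zero D),
        coeff_one]
  map_add' a b := by
    ext k
    rw [coeff_add, (hD.exists_polynomial ι a).choose_spec, (hD.exists_polynomial ι b).choose_spec,
      ← add_div, ← map_add, ← iterate_map_add]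
    exact (hD.exists_polynomial ι (a + b)).choose_spec k
  map_mul' a b := by
    ext k
    simp only [coeff_mul, (hD.exists_polynomial ι a).choose_spec,
      (hD.exists_polynomial ι b).choose_spec, ← iterate_derivation_mul_div_factorial]
    exact (hD.exists_polynomial ι (a * b)).choose_spec k

variable [CharZero K] {D : Derivation R A A} (hD : IsLocallyNilpotent D) (ι : A →+* K)

theorem IsLocallyNilpotent.coeff_orbitMap (a : A) (k : ℕ) :
    (hD.orbitMap ι a).coeff k = ι (D^[k] a) / k.factorial :=
  (hD.exists_polynomial ι a).choose_spec k

theorem IsLocallyNilpotent.orbitMap_algebraMap (c : R) :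
    hD.orbitMap ι (algebraMap R A c) = C (ι (algebraMap R A c)) := by
  ext (_ | k)
  · simp [hD.coeff_orbitMap]
  · simp [hD.coeff_orbitMap, Function.iterate_fixed (map_zero D)]

theorem IsLocallyNilpotent.map_apply_eq_zero {a : A}
    (ha : hD.orbitMap ι a ∈ (C : K →+* K[X]).range) : ι (D a) = 0 := by
  obtain ⟨c, hc⟩ := ha
  simpa [← hc, coeff_C] using (hD.coeff_orbitMap ι a 1).symm

end LocallyNilpotent

section ConstantPolynomials

variable {K : Type*} [Field K]

/-- The subring of constant polynomials. -/
noncomputable abbrev constants (K : Type*) [Field K] : Subring K[X] :=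
  (C : K →+* K[X]).range

theorem C_mem_constants (c : K) : C c ∈ constants K := ⟨c, rfl⟩

theorem mem_constants_iff_natDegree_eq_zero {p : K[X]} : p ∈ constants K ↔ p.natDegree = 0 :=
  natDegree_eq_zero.symm

theorem mem_constants_of_mul_mem {p q : K[X]} (hp : p ≠ 0) (hpq : p * q ∈ constants K) :
    q ∈ constants K := by
  rcases eq_or_ne q 0 with rfl | hq
  · exact zero_mem _
  · rw [mem_constants_iff_natDegree_eq_zero, natDegree_mul hp hq] at hpq
    exact mem_constants_iff_natDegree_eq_zero.2 (Nat.eq_zero_of_add_eq_zero hpq).2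

theorem natDegree_vieta_lt {x y z : K[X]} {κ : K}
    (hκ : x ^ 2 + y ^ 2 + z ^ 2 - x * y * z = C κ)
    (hx : x.natDegree ≠ 0) (hz : z.natDegree ≠ 0)
    (hxy : x.natDegree ≤ y.natDegree) (hzy : z.natDegree ≤ y.natDegree) :
    (x * z - y).natDegree < y.natDegree := by
  by_contra! hle
  have ne_zero_of_natDegree {p : K[X]} (hp : p.natDegree ≠ 0) : p ≠ 0 := by
    rintro rfl; exact hp natDegree_zero
  have hdeg_prod : y.natDegree + (x * z - y).natDegree
      ≤ max (2 * x.natDegree) (2 * z.natDegree) := by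
    have hprod : y * (x * z - y) = x ^ 2 + z ^ 2 - C κ := by linear_combination -hκ
    rw [← natDegree_mul (ne_zero_of_natDegree (by omega)) (ne_zero_of_natDegree (by omega)),
      hprod, natDegree_sub_C, ← natDegree_pow, ← natDegree_pow]
    exact natDegree_add_le _ _
  have hdeg_sum : x.natDegree + z.natDegree ≤ max (x * z - y).natDegree y.natDegree := by
    rw [← natDegree_mul (ne_zero_of_natDegree hx) (ne_zero_of_natDegree hz)]
    simpa using natDegree_add_le (x * z - y) y
  omega

theorem exists_sq_sub_mul_add_one_eq_zero [IsAlgClosed K] (t : K) :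
    ∃ r : K, r ^ 2 - t * r + 1 = 0 := by
  obtain ⟨r, hr⟩ := IsAlgClosed.exists_root (X ^ 2 - C t * X + 1 : K[X])
    (by rw [show (X ^ 2 - C t * X + 1 : K[X]).degree = 2 by compute_degree!]; decide)
  exact ⟨r, by simpa using hr⟩

theorem constant_of_conic [IsAlgClosed K] {x z : K[X]} {η κ : K}
    (hκ : x ^ 2 + C η ^ 2 + z ^ 2 - x * C η * z = C κ) (hη : η ^ 2 ≠ κ) (hη' : η ^ 2 ≠ 4) :
    x ∈ constants K ∧ z ∈ constants K := by
  obtain ⟨r, hr⟩ := exists_sq_sub_mul_add_one_eq_zero η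
  have hfactor : (x - C r * z) * (x - C (η - r) * z) = C (κ - η ^ 2) := by
    have hr' := congrArg C hr
    simp only [C_add, C_sub, C_mul, C_pow, C_1, C_0] at hr' ⊢
    linear_combination hκ - z ^ 2 * hr'
  obtain ⟨hne, hne'⟩ : x - C r * z ≠ 0 ∧ x - C (η - r) * z ≠ 0 := by
    rw [← mul_ne_zero_iff, hfactor]
    exact C_ne_zero.2 (sub_ne_zero.2 hη.symm)
  have hconst' : x - C (η - r) * z ∈ constants K :=
    mem_constants_of_mul_mem hne (hfactor ▸ C_mem_constants _)
  have hconst : x - C r * z ∈ constants K :=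
    mem_constants_of_mul_mem hne' (by rw [mul_comm, hfactor]; exact C_mem_constants _)
  have hz : z ∈ constants K := by
    have hdisc : η - 2 * r ≠ 0 := fun h => hη' (by linear_combination (η - 2 * r) * h - 4 * hr)
    refine mem_constants_of_mul_mem (C_ne_zero.2 hdisc) ?_
    convert sub_mem hconst hconst' using 1
    simp only [C_sub, C_mul, map_ofNat]
    ring
  refine ⟨?_, hz⟩
  simpa using add_mem hconst (mul_mem (C_mem_constants r) hz)

end ConstantPolynomials

namespace SL2

variable {R R' : Type*} [CommRing R] [CommRing R']

/-- The trace of an element of `SL(2, R)`, regarded as a function on the group. -/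
def tr (a : SL(2, R)) : R := trace (a : Matrix (Fin 2) (Fin 2) R)

variable (a b c : SL(2, R))

theorem tr_eq : tr a = a 0 0 + a 1 1 := trace_fin_two _

theorem det_entries : a 0 0 * a 1 1 - a 0 1 * a 1 0 = 1 := by
  rw [← det_fin_two]; exact a.det_coe

theorem coe_inv : (↑a⁻¹ : Matrix (Fin 2) (Fin 2) R) = tr a • 1 - (a : Matrix _ _ R) := by
  rw [Matrix.SpecialLinearGroup.coe_inv, adjugate_fin_two, tr_eq]
  ext i j; fin_cases i <;> fin_cases j <;> simp

theorem tr_map (f : R →+* R') : tr (Matrix.SpecialLinearGroup.map f a) = f (tr a) := by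
  simp [tr_eq]

theorem tr_one : tr (1 : SL(2, R)) = 2 := by
  simp [tr]

theorem ne_one_of_tr_ne_two {g : SL(2, R)} (hg : tr g ≠ 2) : g ≠ 1 :=
  fun h => hg (h ▸ tr_one)

theorem tr_mul_comm : tr (a * b) = tr (b * a) :=
  trace_mul_comm _ _

theorem tr_conj : tr (c * a * c⁻¹) = tr a := by
  rw [tr_mul_comm, inv_mul_cancel_left]

theorem tr_mul_inv : tr (a * b⁻¹) = tr a * tr b - tr (a * b) := by
  simp [tr, coe_inv, mul_sub, mul_comm, -Matrix.SpecialLinearGroup.coe_inv]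

theorem tr_inv : tr a⁻¹ = tr a := by
  simpa [tr_one, two_mul] using tr_mul_inv 1 a

theorem tr_mul_mul_self : tr (a * (b * a)) = tr a * tr (a * b) - tr b := by
  have h := tr_mul_inv (a * b) a
  rw [tr_conj] at h
  rw [← mul_assoc]
  linear_combination h

/-- Fricke's identity. -/
theorem tr_commutator :
    tr ⁅a, b⁆ = tr a ^ 2 + tr b ^ 2 + tr (a * b) ^ 2 - tr a * tr b * tr (a * b) - 2 := by
  have hconj : tr (a * b * a⁻¹ * b) = tr (b * (a * b) * a⁻¹) := by
    rw [tr_mul_comm]; simp only [mul_assoc]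
  have hsq : tr (b * (a * b) * a) = tr (a * b) * tr (a * b) - 2 := by
    simpa [tr_one, tr_mul_comm b a, mul_assoc] using tr_mul_mul_self (b * a) 1
  rw [commutatorElement_def, tr_mul_inv, tr_conj, hconj, tr_mul_inv, tr_mul_mul_self, hsq,
    tr_mul_comm b a]
  ring

end SL2

/-- Names for two elementary Nielsen transformations of pairs of group elements, which generate the
moves of the Markov descent. -/
inductive NielsenMove
  | rotate
  | transvect
  deriving Countable

namespace NielsenMove

/-- The Nielsen transformations `(a, b) ↦ (ab, a⁻¹)` and `(a, b) ↦ (a, ba)`. -/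
def perm (G : Type*) [Group G] : NielsenMove → Equiv.Perm (G × G)
  | rotate =>
    { toFun p := (p.1 * p.2, p.1⁻¹)
      invFun p := (p.2⁻¹, p.2 * p.1)
      left_inv p := by simp
      right_inv p := by simp }
  | transvect =>
    { toFun p := (p.1, p.2 * p.1)
      invFun p := (p.1, p.2 * p.1⁻¹)
      left_inv p := by simp
      right_inv p := by simp }

/-- The action on pairs of a word in the Nielsen moves; the last letter acts first. -/
def wordPerm (G : Type*) [Group G] (w : List NielsenMove) : Equiv.Perm (G × G) :=
  (w.map (perm G)).prod

variable {G H : Type*} [Group G] [Group H]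

theorem wordPerm_nil (p : G × G) : wordPerm G [] p = p := rfl

theorem wordPerm_cons (σ : NielsenMove) (w : List NielsenMove) (p : G × G) :
    wordPerm G (σ :: w) p = perm G σ (wordPerm G w p) := by
  simp [wordPerm]

theorem wordPerm_append (v w : List NielsenMove) (p : G × G) :
    wordPerm G (v ++ w) p = wordPerm G v (wordPerm G w p) := by
  simp [wordPerm]

theorem commutator_perm (σ : NielsenMove) (p : G × G) :
    ⁅(perm G σ p).1, (perm G σ p).2⁆ = ⁅p.1, p.2⁆ := by
  cases σ <;> simp [perm, commutatorElement_def, mul_assoc]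

theorem commutator_wordPerm (w : List NielsenMove) (p : G × G) :
    ⁅(wordPerm G w p).1, (wordPerm G w p).2⁆ = ⁅p.1, p.2⁆ := by
  induction w with
  | nil => rfl
  | cons σ w ih => rw [wordPerm_cons, commutator_perm, ih]

theorem perm_map (f : G →* H) (σ : NielsenMove) (p : G × G) :
    perm H σ (Prod.map f f p) = Prod.map f f (perm G σ p) := by
  cases σ <;> simp [perm]

theorem wordPerm_map (f : G →* H) (w : List NielsenMove) (p : G × G) :
    wordPerm H w (Prod.map f f p) = Prod.map f f (wordPerm G w p) := by
  induction w with
  | nil => rfl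
  | cons σ w ih => rw [wordPerm_cons, wordPerm_cons, ih, perm_map]

theorem mem_prod_of_perm_mem {S : Subgroup G} {σ : NielsenMove} {p : G × G}
    (hp : perm G σ p ∈ S.prod S) : p ∈ S.prod S := by
  rw [Subgroup.mem_prod] at hp ⊢
  cases σ with
  | rotate =>
    have h₁ : p.1 ∈ S := inv_mem_iff.1 hp.2
    exact ⟨h₁, (S.mul_mem_cancel_left h₁).1 hp.1⟩
  | transvect => exact ⟨hp.1, (S.mul_mem_cancel_right hp.1).1 hp.2⟩

theorem mem_prod_of_wordPerm_mem {S : Subgroup G} {w : List NielsenMove} {p : G × G}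
    (hp : wordPerm G w p ∈ S.prod S) : p ∈ S.prod S := by
  induction w with
  | nil => exact hp
  | cons σ w ih => exact ih (mem_prod_of_perm_mem (wordPerm_cons σ w p ▸ hp))

section Continuity

variable [TopologicalSpace G] [IsTopologicalGroup G]

theorem continuous_perm (σ : NielsenMove) : Continuous (perm G σ) := by
  cases σ <;> simp only [perm, Equiv.coe_fn_mk] <;> fun_prop

theorem continuous_perm_symm (σ : NielsenMove) : Continuous (perm G σ).symm := by
  cases σ <;> simp only [perm, Equiv.coe_fn_symm_mk] <;> fun_prop

theorem continuous_wordPerm (w : List NielsenMove) : Continuous (wordPerm G w) := by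
  induction w with
  | nil => exact continuous_id
  | cons σ w ih =>
    simpa only [wordPerm, List.map_cons, List.prod_cons, Equiv.Perm.coe_mul] using
      (continuous_perm σ).comp ih

theorem continuous_wordPerm_symm (w : List NielsenMove) : Continuous (wordPerm G w).symm := by
  induction w with
  | nil => exact continuous_id
  | cons σ w ih => exact ih.comp (continuous_perm_symm σ)

end Continuity

variable {R K : Type*} [CommRing R] [Field K]

theorem tr_fst_rotate (p : SL(2, R) × SL(2, R)) :
    SL2.tr (perm _ rotate p).1 = SL2.tr (p.1 * p.2) := rfl

theorem tr_snd_rotate (p : SL(2, R) × SL(2, R)) : SL2.tr (perm _ rotate p).2 = SL2.tr p.1 :=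
  SL2.tr_inv _

theorem tr_mul_rotate (p : SL(2, R) × SL(2, R)) :
    SL2.tr ((perm _ rotate p).1 * (perm _ rotate p).2) = SL2.tr p.2 :=
  SL2.tr_conj _ _

theorem tr_mul_transvect (p : SL(2, R) × SL(2, R)) :
    SL2.tr ((perm _ transvect p).1 * (perm _ transvect p).2)
      = SL2.tr p.1 * SL2.tr (p.1 * p.2) - SL2.tr p.2 :=
  SL2.tr_mul_mul_self _ _

/-- The total degree of the Fricke coordinates of a pair, the quantity that Markov descent
lowers. -/
noncomputable def traceDegree (p : SL(2, K[X]) × SL(2, K[X])) : ℕ :=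
  (SL2.tr p.1).natDegree + (SL2.tr p.2).natDegree + (SL2.tr (p.1 * p.2)).natDegree

theorem traceDegree_rotate (p : SL(2, K[X]) × SL(2, K[X])) :
    traceDegree (perm _ rotate p) = traceDegree p := by
  simp only [traceDegree, tr_fst_rotate, tr_snd_rotate, tr_mul_rotate]
  ring

theorem traceDegree_transvect_lt {p : SL(2, K[X]) × SL(2, K[X])}
    (hp : SL2.tr ⁅p.1, p.2⁆ ∈ constants K)
    (h₁ : (SL2.tr p.1).natDegree ≠ 0) (h₁₂ : (SL2.tr (p.1 * p.2)).natDegree ≠ 0)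
    (hle₁ : (SL2.tr p.1).natDegree ≤ (SL2.tr p.2).natDegree)
    (hle₁₂ : (SL2.tr (p.1 * p.2)).natDegree ≤ (SL2.tr p.2).natDegree) :
    traceDegree (perm _ transvect p) < traceDegree p := by
  obtain ⟨c, hc⟩ := hp
  rw [SL2.tr_commutator] at hc
  have hκ : SL2.tr p.1 ^ 2 + SL2.tr p.2 ^ 2 + SL2.tr (p.1 * p.2) ^ 2
      - SL2.tr p.1 * SL2.tr p.2 * SL2.tr (p.1 * p.2) = C (c + 2) := by
    rw [C_add, hc, map_ofNat]; ring
  have hlt := natDegree_vieta_lt hκ h₁ h₁₂ hle₁ hle₁₂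
  have h₂ : SL2.tr (perm _ transvect p).2 = SL2.tr (p.1 * p.2) := SL2.tr_mul_comm _ _
  have h₁' : (perm _ transvect p).1 = p.1 := rfl
  rw [traceDegree, traceDegree, tr_mul_transvect, h₂, h₁']
  omega

theorem exists_wordPerm_traceDegree_lt {p : SL(2, K[X]) × SL(2, K[X])}
    (hp : SL2.tr ⁅p.1, p.2⁆ ∈ constants K)
    (h₁ : (SL2.tr p.1).natDegree ≠ 0) (h₂ : (SL2.tr p.2).natDegree ≠ 0)
    (h₁₂ : (SL2.tr (p.1 * p.2)).natDegree ≠ 0) :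
    ∃ w, traceDegree (wordPerm _ w p) < traceDegree p := by
  have hrot {q : SL(2, K[X]) × SL(2, K[X])} (hq : SL2.tr ⁅q.1, q.2⁆ ∈ constants K) :
      SL2.tr ⁅(perm _ rotate q).1, (perm _ rotate q).2⁆ ∈ constants K := by
    rwa [commutator_perm]
  obtain ⟨hle₁, hle₁₂⟩ | ⟨hle₂, hle₁₂⟩ | ⟨hle₁, hle₂⟩ :
      ((SL2.tr p.1).natDegree ≤ (SL2.tr p.2).natDegree ∧
        (SL2.tr (p.1 * p.2)).natDegree ≤ (SL2.tr p.2).natDegree) ∨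
      ((SL2.tr p.2).natDegree ≤ (SL2.tr p.1).natDegree ∧
        (SL2.tr (p.1 * p.2)).natDegree ≤ (SL2.tr p.1).natDegree) ∨
      ((SL2.tr p.1).natDegree ≤ (SL2.tr (p.1 * p.2)).natDegree ∧
        (SL2.tr p.2).natDegree ≤ (SL2.tr (p.1 * p.2)).natDegree) := by
    omega
  · have hlt := traceDegree_transvect_lt hp h₁ h₁₂ hle₁ hle₁₂
    exact ⟨[transvect], by simpa only [wordPerm_cons, wordPerm_nil] using hlt⟩
  · have hlt := traceDegree_transvect_lt (hrot hp) h₁₂ (by rwa [tr_mul_rotate])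
      (by rwa [tr_fst_rotate, tr_snd_rotate]) (by rwa [tr_mul_rotate, tr_snd_rotate])
    rw [traceDegree_rotate] at hlt
    exact ⟨[transvect, rotate], by simpa only [wordPerm_cons, wordPerm_nil] using hlt⟩
  · have hlt := traceDegree_transvect_lt (hrot (hrot hp)) (by rwa [tr_fst_rotate, tr_mul_rotate])
      (by rwa [tr_mul_rotate, tr_snd_rotate])
      (by rwa [tr_fst_rotate, tr_snd_rotate, tr_mul_rotate, tr_fst_rotate])
      (by rwa [tr_mul_rotate, tr_snd_rotate, tr_snd_rotate, tr_fst_rotate])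
    rw [traceDegree_rotate, traceDegree_rotate] at hlt
    exact ⟨[transvect, rotate, rotate], by simpa only [wordPerm_cons, wordPerm_nil] using hlt⟩

theorem exists_wordPerm_tr_snd_mem_constants {p : SL(2, K[X]) × SL(2, K[X])}
    (hp : SL2.tr ⁅p.1, p.2⁆ ∈ constants K) :
    ∃ w, SL2.tr (wordPerm _ w p).2 ∈ constants K := by
  simp only [mem_constants_iff_natDegree_eq_zero]
  induction hd : traceDegree p using Nat.strong_induction_on generalizing p with
  | _ d ih =>
    by_cases h₂ : (SL2.tr p.2).natDegree = 0
    · exact ⟨[], h₂⟩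
    by_cases h₁ : (SL2.tr p.1).natDegree = 0
    · exact ⟨[rotate], by simpa only [wordPerm_cons, wordPerm_nil, tr_snd_rotate] using h₁⟩
    by_cases h₁₂ : (SL2.tr (p.1 * p.2)).natDegree = 0
    · exact ⟨[rotate, rotate], by
        simpa only [wordPerm_cons, wordPerm_nil, tr_snd_rotate, tr_fst_rotate] using h₁₂⟩
    obtain ⟨v, hv⟩ := exists_wordPerm_traceDegree_lt hp h₁ h₂ h₁₂
    obtain ⟨w, hw⟩ := ih _ (hd ▸ hv) (by rwa [commutator_wordPerm]) rfl
    exact ⟨w ++ v, by rwa [wordPerm_append]⟩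

end NielsenMove

section ConstantMatrices

variable {K : Type*} [Field K]

/-- The subgroup of `SL(2, K[X])` consisting of the matrices with constant entries. -/
noncomputable abbrev constantMatrices (K : Type*) [Field K] : Subgroup SL(2, K[X]) :=
  (Matrix.SpecialLinearGroup.map (C : K →+* K[X])).range

theorem mem_constantMatrices_iff {a : SL(2, K[X])} :
    a ∈ constantMatrices K ↔ ∀ i j, a i j ∈ constants K := by
  constructor
  · rintro ⟨a, rfl⟩ i j
    exact C_mem_constants (a i j)
  · intro h
    choose A hA using h
    have hAa : Matrix.map (.of A) C = (a : Matrix (Fin 2) (Fin 2) K[X]) := by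
      ext1 i j; exact hA i j
    have hdet : (Matrix.of A).det = 1 := by
      apply C_injective
      rw [← RingHom.coe_coe, RingHom.map_det, RingHom.mapMatrix_apply]
      simp [hAa]
    exact ⟨⟨.of A, hdet⟩, Subtype.ext hAa⟩

theorem forall_mem_constants_of_mul_mem {ι ι' : Type*} {u : ι → K[X]} {v : ι' → K[X]}
    (hu : u ≠ 0) (huv : ∀ i j, u i * v j ∈ constants K) (j : ι') : v j ∈ constants K := by
  obtain ⟨i, hi⟩ := Function.ne_iff.1 hu
  exact mem_constants_of_mul_mem hi (huv i j)

end ConstantMatrices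

namespace SL2

variable {K : Type*} [Field K]

theorem apply_zero_ne_apply_one_of_isDiag {g : SL(2, K)}
    (hdiag : (g : Matrix (Fin 2) (Fin 2) K).IsDiag) (hg : tr g ≠ 2) (hg' : tr g ≠ -2) :
    g 0 0 ≠ g 1 1 := by
  intro h
  have hsq : g 1 1 * g 1 1 = 1 := by
    have hdet := det_entries g
    rwa [hdiag (show (0 : Fin 2) ≠ 1 by decide), h, zero_mul, sub_zero] at hdet
  rcases mul_self_eq_one_iff.1 hsq with h1 | h1
  · exact hg (by rw [tr_eq, h, h1]; norm_num)
  · exact hg' (by rw [tr_eq, h, h1]; norm_num)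

theorem exists_hasEigenvector {g : SL(2, K)} {r : K} (hr : r ^ 2 - tr g * r + 1 = 0) :
    ∃ v, Module.End.HasEigenvector (toLin' (g : Matrix (Fin 2) (Fin 2) K)) r v := by
  have hdet : ((g : Matrix (Fin 2) (Fin 2) K) - r • 1).det = 0 := by
    rw [det_fin_two]
    simp only [Matrix.sub_apply, Matrix.smul_apply, Matrix.one_apply_eq, smul_eq_mul, mul_one,
      ne_eq, zero_ne_one, one_ne_zero, not_false_eq_true, Matrix.one_apply_ne, mul_zero, sub_zero]
    linear_combination hr + r * tr_eq g + det_entries g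
  obtain ⟨v, hv, hgv⟩ := exists_mulVec_eq_zero_iff.2 hdet
  rw [sub_mulVec, smul_mulVec, one_mulVec, sub_eq_zero] at hgv
  exact ⟨v, Module.End.mem_eigenspace_iff.2 hgv, hv⟩

theorem exists_conj_isDiag_of_hasEigenvector {g : SL(2, K)} {r s : K} {v w : Fin 2 → K}
    (hrs : r ≠ s) (hv : Module.End.HasEigenvector (toLin' (g : Matrix (Fin 2) (Fin 2) K)) r v)
    (hw : Module.End.HasEigenvector (toLin' (g : Matrix (Fin 2) (Fin 2) K)) s w) :
    ∃ k : SL(2, K), ((k⁻¹ * g * k : SL(2, K)) : Matrix (Fin 2) (Fin 2) K).IsDiag := by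
  have hrows : IsUnit (of ![v, w]) := by
    refine linearIndependent_rows_iff_isUnit.1 <|
      Module.End.eigenvectors_linearIndependent' _ ![r, s] ?_ _ (Fin.forall_fin_two.2 ⟨hv, hw⟩)
    rw [Function.Injective]
    simp [Fin.forall_fin_two, hrs, hrs.symm]
  have hd : (of ![v, w]).det ≠ 0 := ((isUnit_iff_isUnit_det _).1 hrows).ne_zero
  set d := (of ![v, w]).det
  let k : SL(2, K) := ⟨(of ![d⁻¹ • v, w])ᵀ, by
    rw [det_transpose, ← inv_mul_cancel₀ hd]
    simp only [d, det_fin_two, of_apply, cons_val', cons_val_zero, cons_val_one, Pi.smul_apply,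
      smul_eq_mul]
    ring⟩
  have hgk : (g : Matrix (Fin 2) (Fin 2) K) * (k : Matrix (Fin 2) (Fin 2) K)
      = k * diagonal ![r, s] := by
    have hgv : ↑g *ᵥ (d⁻¹ • v) = r • d⁻¹ • v := by
      rw [mulVec_smul, smul_comm]
      exact congrArg (d⁻¹ • ·) (Module.End.mem_eigenspace_iff.1 hv.1)
    have hgw : ↑g *ᵥ w = s • w := Module.End.mem_eigenspace_iff.1 hw.1
    ext i j
    rw [mul_diagonal, mul_comm]
    fin_cases j
    exacts [congrFun hgv i, congrFun hgw i]
  refine ⟨k, ?_⟩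
  rw [Matrix.SpecialLinearGroup.coe_mul, Matrix.SpecialLinearGroup.coe_mul, mul_assoc, hgk,
    ← mul_assoc, ← Matrix.SpecialLinearGroup.coe_mul, inv_mul_cancel,
    Matrix.SpecialLinearGroup.coe_one, one_mul]
  exact isDiag_diagonal _

theorem exists_conj_isDiag [IsAlgClosed K] {g : SL(2, K)} (hg : tr g ≠ 2) (hg' : tr g ≠ -2) :
    ∃ k : SL(2, K), ((k⁻¹ * g * k : SL(2, K)) : Matrix (Fin 2) (Fin 2) K).IsDiag := by
  obtain ⟨r, hr⟩ := exists_sq_sub_mul_add_one_eq_zero (tr g)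
  have hne : r ≠ tr g - r := by
    intro h
    have hsq : r * r = 1 := by linear_combination -hr + r * h
    rcases mul_self_eq_one_iff.1 hsq with rfl | rfl
    · exact hg (by linear_combination -h)
    · exact hg' (by linear_combination -h)
  obtain ⟨v, hv⟩ := exists_hasEigenvector hr
  obtain ⟨w, hw⟩ := exists_hasEigenvector (g := g) (r := tr g - r) (by linear_combination hr)
  exact exists_conj_isDiag_of_hasEigenvector hne hv hw

section DiagonalCommutator

variable {g : SL(2, K)} (hdiag : (g : Matrix (Fin 2) (Fin 2) K).IsDiag)
include hdiag

theorem map_C_mul_apply_self (c : SL(2, K[X])) (i : Fin 2) :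
    (Matrix.SpecialLinearGroup.map C g * c) i i = C (g i i) * c i i := by
  have h01 := hdiag (show (0 : Fin 2) ≠ 1 by decide)
  have h10 := hdiag (show (1 : Fin 2) ≠ 0 by decide)
  fin_cases i <;> simp [mul_apply, Fin.sum_univ_two, h01, h10]

variable (hne : g 0 0 ≠ g 1 1)
include hne

theorem apply_self_mem_constants {c : SL(2, K[X])} (hc : tr c ∈ constants K)
    (hgc : tr (Matrix.SpecialLinearGroup.map C g * c) ∈ constants K) (i : Fin 2) :
    c i i ∈ constants K := by
  rw [tr_eq, map_C_mul_apply_self hdiag, map_C_mul_apply_self hdiag] at hgc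
  rw [tr_eq] at hc
  have h0 : c 0 0 ∈ constants K := by
    refine mem_constants_of_mul_mem (C_ne_zero.2 (sub_ne_zero.2 hne)) ?_
    convert sub_mem hgc (mul_mem (C_mem_constants (g 1 1)) hc) using 1
    rw [C_sub]; ring
  have h1 : c 1 1 ∈ constants K := (add_mem_cancel_left h0).1 hc
  fin_cases i
  exacts [h0, h1]

variable {a b : SL(2, K[X])} (hab : ⁅a, b⁆ = Matrix.SpecialLinearGroup.map C g)
include hab

theorem offDiag_ne_zero_of_commutator : ![a 0 1, b 0 1] ≠ 0 ∧ ![a 1 0, b 1 0] ≠ 0 := by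
  suffices h : ¬(a 0 1 * b 1 0 = 0 ∧ b 0 1 * a 1 0 = 0 ∧ a 0 1 * a 1 0 = 0 ∧ b 0 1 * b 1 0 = 0) by
    constructor <;> intro h0 <;> simp only [cons_eq_zero_iff] at h0 <;> exact h (by simp [h0])
  rintro ⟨hab0, hba0, ha0, hb0⟩
  have hda := det_entries a
  have hdb := det_entries b
  have hcomm : Matrix.SpecialLinearGroup.map C g * (b * a) = a * b := by
    rw [← hab, commutatorElement_def]; group
  have h0 := map_C_mul_apply_self hdiag (b * a) 0
  have h1 := map_C_mul_apply_self hdiag (b * a) 1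
  rw [hcomm] at h0 h1
  simp only [Matrix.SpecialLinearGroup.coe_mul, mul_apply, Fin.sum_univ_two, mul_comm (b 1 0),
    mul_comm (a 1 0), hab0, hba0, ha0, hb0, add_zero, zero_add, sub_zero] at h0 h1 hda hdb
  have hg0 : C (g 0 0) = 1 := by
    linear_combination -a 1 1 * b 1 1 * h0 - (C (g 0 0) - 1) * (b 0 0 * b 1 1 * hda + hdb)
  have hg1 : C (g 1 1) = 1 := by
    linear_combination -a 0 0 * b 0 0 * h1 - (C (g 1 1) - 1) * (b 0 0 * b 1 1 * hda + hdb)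
  exact hne (C_injective (hg0.trans hg1.symm))

theorem mem_constantMatrices_of_isDiag (ha : tr a ∈ constants K) (hb : tr b ∈ constants K)
    (htrab : tr (a * b) ∈ constants K) : a ∈ constantMatrices K ∧ b ∈ constantMatrices K := by
  have hda := apply_self_mem_constants hdiag hne (c := a⁻¹) (by rwa [tr_inv]) (by
    rwa [← hab, show ⁅a, b⁆ * a⁻¹ = a * (b * a⁻¹ * b⁻¹) * a⁻¹ by rw [commutatorElement_def]; group,
      tr_conj, tr_conj, tr_inv])
  rw [Fin.forall_fin_two, and_comm] at hda
  simp only [Matrix.SpecialLinearGroup.coe_inv, adjugate_fin_two, of_apply, cons_val',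
    cons_val_zero, cons_val_one] at hda
  have hdb := apply_self_mem_constants hdiag hne (c := b) hb
    (by rwa [← hab, commutatorElement_def, inv_mul_cancel_right, tr_conj])
  have hdba := apply_self_mem_constants hdiag hne (c := b * a) (by rwa [tr_mul_comm])
    (by rw [← hab, commutatorElement_def]; simpa [mul_assoc] using htrab)
  rw [Fin.forall_fin_two] at hdb hdba
  have hmul (i j : Fin 2) : ![a 0 1, b 0 1] i * ![a 1 0, b 1 0] j ∈ constants K := by
    fin_cases i <;> fin_cases j
    · convert sub_mem (mul_mem hda.1 hda.2) (one_mem _) using 1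
      change a 0 1 * a 1 0 = _
      linear_combination -det_entries a
    · convert sub_mem hdba.2 (mul_mem hdb.2 hda.2) using 1
      simp [mul_apply, mul_comm]
    · convert sub_mem hdba.1 (mul_mem hdb.1 hda.1) using 1
      simp [mul_apply]
    · convert sub_mem (mul_mem hdb.1 hdb.2) (one_mem _) using 1
      change b 0 1 * b 1 0 = _
      linear_combination -det_entries b
  obtain ⟨hupper, hlower⟩ := offDiag_ne_zero_of_commutator hdiag hne hab
  have hl := Fin.forall_fin_two.1 (forall_mem_constants_of_mul_mem hupper hmul)
  have hu := Fin.forall_fin_two.1 (forall_mem_constants_of_mul_mem hlower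
    fun i j => mul_comm (![a 1 0, b 1 0] i) _ ▸ hmul j i)
  simp only [mem_constantMatrices_iff, Fin.forall_fin_two]
  exact ⟨⟨⟨hda.1, hu.1⟩, hl.1, hda.2⟩, ⟨hdb.1, hu.2⟩, hl.2, hdb.2⟩

end DiagonalCommutator

theorem mem_constantMatrices_of_tr [IsAlgClosed K] {g : SL(2, K)} (hg : tr g ≠ 2) (hg' : tr g ≠ -2)
    {a b : SL(2, K[X])} (hab : ⁅a, b⁆ = Matrix.SpecialLinearGroup.map C g)
    (ha : tr a ∈ constants K) (hb : tr b ∈ constants K) (htrab : tr (a * b) ∈ constants K) :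
    a ∈ constantMatrices K ∧ b ∈ constantMatrices K := by
  obtain ⟨k, hk⟩ := exists_conj_isDiag hg hg'
  set κ : SL(2, K[X]) := Matrix.SpecialLinearGroup.map C k⁻¹
  have hκ : κ ∈ constantMatrices K := ⟨k⁻¹, rfl⟩
  have htrk : tr (k⁻¹ * g * k) = tr g := by simpa using tr_conj g k⁻¹
  have hab' : ⁅κ * a * κ⁻¹, κ * b * κ⁻¹⁆ = Matrix.SpecialLinearGroup.map C (k⁻¹ * g * k) := by
    rw [← conjugate_commutatorElement, hab]
    simp [κ]
  have hne := apply_zero_ne_apply_one_of_isDiag hk (htrk ▸ hg) (htrk ▸ hg')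
  have hconj := mem_constantMatrices_of_isDiag hk hne hab' (by rwa [tr_conj]) (by rwa [tr_conj])
    (by rwa [conj_mul, tr_conj])
  simpa only [Subgroup.mul_mem_cancel_right _ (inv_mem hκ), Subgroup.mul_mem_cancel_left _ hκ]
    using hconj

end SL2

theorem mem_constantMatrices_of_commutator {K : Type*} [Field K] [IsAlgClosed K] {g : SL(2, K)}
    (hg : SL2.tr g ≠ 2) (hg' : SL2.tr g ≠ -2) {p : SL(2, K[X]) × SL(2, K[X])}
    (hp : ⁅p.1, p.2⁆ = Matrix.SpecialLinearGroup.map C g)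
    (hgen : ∀ w η, SL2.tr (NielsenMove.wordPerm _ w p).2 = C η → η ^ 2 ≠ SL2.tr g + 2 ∧ η ^ 2 ≠ 4) :
    p ∈ (constantMatrices K).prod (constantMatrices K) := by
  have htr : SL2.tr ⁅p.1, p.2⁆ = C (SL2.tr g) := by rw [hp, SL2.tr_map]
  obtain ⟨w, η, hη⟩ := NielsenMove.exists_wordPerm_tr_snd_mem_constants (htr ▸ C_mem_constants _)
  obtain ⟨hη₁, hη₂⟩ := hgen w η hη.symm
  refine NielsenMove.mem_prod_of_wordPerm_mem (w := w) ?_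
  rw [← NielsenMove.commutator_wordPerm w] at hp htr
  set q := NielsenMove.wordPerm _ w p
  rw [SL2.tr_commutator, ← hη] at htr
  obtain ⟨hfst, hmul⟩ := constant_of_conic (x := SL2.tr q.1) (z := SL2.tr (q.1 * q.2))
    (κ := SL2.tr g + 2) (by rw [C_add, ← htr, map_ofNat]; ring) hη₁ hη₂
  exact SL2.mem_constantMatrices_of_tr hg hg' hp hfst (hη ▸ C_mem_constants η) hmul

section Powers

open Polynomial.Chebyshev (S)

variable {R K : Type*} [CommRing R] [Field K]

theorem eval_chebyshev_C (m : ℤ) (t : R) :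
    (Chebyshev.C R m).eval t = t * (S R (m - 1)).eval t - 2 * (S R (m - 2)).eval t := by
  have hC := congrArg (eval t) (Chebyshev.C_eq_S_sub_X_mul_S R m)
  have hS := congrArg (eval t) (Chebyshev.S_eq R m)
  simp only [eval_sub, eval_mul, eval_X, eval_ofNat] at hC hS
  linear_combination hC + 2 * hS

section CharZero

variable [CharZero K]

theorem eval_derivative_chebyshev_C (m : ℤ) (t : K) :
    (derivative (Chebyshev.C K m)).eval t = m * (S K (m - 1)).eval t := by
  have hC := congrArg (fun p => (derivative p).eval (t / 2)) (Chebyshev.C_comp_two_mul_X K m)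
  have hS := congrArg (eval (t / 2)) (Chebyshev.S_comp_two_mul_X K (m - 1))
  simp only [derivative_comp, derivative_mul, derivative_ofNat, derivative_X, zero_mul, zero_add,
    mul_one, eval_mul, eval_ofNat, eval_comp, eval_X, Chebyshev.T_derivative_eq_U, eval_intCast,
    mul_div_cancel₀ t (two_ne_zero' K)] at hC hS
  rw [hS]
  exact mul_left_cancel₀ two_ne_zero hC

theorem natDegree_chebyshev_C (m : ℤ) : (Chebyshev.C K m).natDegree = m.natAbs := by
  have h2 : (2 : K[X]) = C 2 := rfl
  have h := congrArg natDegree (Chebyshev.C_comp_two_mul_X K m)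
  rwa [natDegree_comp, h2, natDegree_C_mul_X _ two_ne_zero, mul_one,
    natDegree_C_mul two_ne_zero, Chebyshev.natDegree_T] at h

theorem mem_constants_of_eval_chebyshev_C {m : ℤ} (hm : m ≠ 0) {t : K[X]}
    (ht : (Chebyshev.C K[X] m).eval t ∈ constants K) : t ∈ constants K := by
  rw [← Chebyshev.aeval_C (R := K), ← comp_eq_aeval, mem_constants_iff_natDegree_eq_zero,
    natDegree_comp, natDegree_chebyshev_C] at ht
  exact mem_constants_iff_natDegree_eq_zero.2
    ((mul_eq_zero.1 ht).resolve_left (Int.natAbs_ne_zero.2 hm))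

end CharZero

theorem eval_chebyshev_S_mem_constants {t : K[X]} (ht : t ∈ constants K) (m : ℤ) :
    (S K[X] m).eval t ∈ constants K := by
  obtain ⟨c, rfl⟩ := ht
  exact ⟨_, Chebyshev.algebraMap_eval_S c m⟩

namespace SL2

theorem coe_mul_self (a : SL(2, R)) :
    (a : Matrix (Fin 2) (Fin 2) R) * a = tr a • (a : Matrix (Fin 2) (Fin 2) R) - 1 := by
  have h := congrArg Subtype.val (mul_inv_cancel a)
  rw [Matrix.SpecialLinearGroup.coe_mul, coe_inv, mul_sub, mul_smul_comm, mul_one,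
    Matrix.SpecialLinearGroup.coe_one] at h
  rw [← h, sub_sub_cancel]

theorem coe_zpow (a : SL(2, R)) (m : ℤ) :
    (↑(a ^ m) : Matrix (Fin 2) (Fin 2) R)
      = (S R (m - 1)).eval (tr a) • (a : Matrix (Fin 2) (Fin 2) R)
        - (S R (m - 2)).eval (tr a) • 1 := by
  have hmul_inv : (a : Matrix (Fin 2) (Fin 2) R) * (↑a⁻¹ : Matrix (Fin 2) (Fin 2) R) = 1 := by
    rw [← Matrix.SpecialLinearGroup.coe_mul, mul_inv_cancel, Matrix.SpecialLinearGroup.coe_one]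
  have hS (k : ℤ) : (S R (k + 1)).eval (tr a)
      = tr a * (S R k).eval (tr a) - (S R (k - 1)).eval (tr a) := by
    rw [Chebyshev.S_add_one, eval_sub, eval_mul, eval_X]
  induction m with
  | zero => simp
  | succ m ih =>
    rw [_root_.zpow_add_one, Matrix.SpecialLinearGroup.coe_mul, ih, sub_mul, smul_mul_assoc,
      coe_mul_self, smul_mul_assoc, one_mul, show (m : ℤ) + 1 - 1 = m - 1 + 1 by ring, hS,
      show (m : ℤ) - 1 - 1 = m - 2 by ring, show (m : ℤ) + 1 - 2 = m - 1 by ring]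
    module
  | pred m ih =>
    rw [_root_.zpow_sub_one, Matrix.SpecialLinearGroup.coe_mul, ih, sub_mul, smul_mul_assoc,
      hmul_inv, smul_mul_assoc, one_mul, coe_inv, show -(m : ℤ) - 1 = -m - 2 + 1 by ring, hS,
      show -(m : ℤ) - 2 + 1 - 1 = -m - 2 by ring, show -(m : ℤ) - 2 + 1 - 2 = -m - 2 - 1 by ring]
    module

theorem tr_zpow (a : SL(2, R)) (m : ℤ) : tr (a ^ m) = (Chebyshev.C R m).eval (tr a) := by
  rw [tr, coe_zpow, trace_sub, trace_smul, trace_smul, trace_one, eval_chebyshev_C]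
  simp [tr, mul_comm]

theorem commute_zpow_of_eval_eq_zero {a : SL(2, R)} {m : ℤ} (h : (S R (m - 1)).eval (tr a) = 0)
    (b : SL(2, R)) : Commute (a ^ m) b := by
  apply Subtype.ext
  rw [Matrix.SpecialLinearGroup.coe_mul, Matrix.SpecialLinearGroup.coe_mul, coe_zpow, h]
  simp

theorem exists_zpow_eq {m : ℤ} {b : SL(2, K)} {t : K}
    (ht : (Chebyshev.C K m).eval t = tr b) (hS : (S K (m - 1)).eval t ≠ 0) :
    ∃ a : SL(2, K), a ^ m = b ∧ (a : Matrix (Fin 2) (Fin 2) K)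
      = ((S K (m - 1)).eval t)⁻¹ •
        (↑b + (S K (m - 2)).eval t • (1 : Matrix (Fin 2) (Fin 2) K)) := by
  have hsq := congrArg (eval t) (Chebyshev.S_sq_add_S_sq K (m - 2))
  rw [show m - 2 + 1 = m - 1 by ring] at hsq
  rw [eval_chebyshev_C] at ht
  simp only [eval_sub, eval_add, eval_mul, eval_pow, eval_X, eval_one] at hsq
  set u := (S K (m - 1)).eval t
  set s := (S K (m - 2)).eval t
  let A : Matrix (Fin 2) (Fin 2) K := u⁻¹ • (↑b + s • 1)
  have hA : A.det = 1 := by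
    have hdet : (↑b + s • 1 : Matrix (Fin 2) (Fin 2) K).det = u ^ 2 := by
      have hdetb := det_entries b
      rw [tr_eq] at ht
      simp only [det_fin_two, Matrix.add_apply, Matrix.smul_apply, one_apply_eq, smul_eq_mul,
        mul_one, ne_eq, zero_ne_one, not_false_eq_true, one_apply_ne, mul_zero, add_zero,
        one_ne_zero]
      linear_combination hdetb - hsq - s * ht
    rw [det_smul, hdet, Fintype.card_fin, inv_pow, inv_mul_cancel₀ (pow_ne_zero 2 hS)]
  let a : SL(2, K) := ⟨A, hA⟩
  have htr : tr a = t := by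
    have hadd : tr a = u⁻¹ * (tr b + 2 * s) := by
      change trace A = _
      rw [trace_smul, trace_add, trace_smul, trace_one, Fintype.card_fin, smul_eq_mul, smul_eq_mul,
        mul_comm 2 s, tr, Nat.cast_ofNat]
    rw [hadd, ← ht]
    field
  refine ⟨a, Subtype.ext ?_, rfl⟩
  rw [coe_zpow, htr]
  change u • u⁻¹ • (_ + s • 1) - s • 1 = _
  rw [smul_inv_smul₀ hS, add_sub_cancel_right]

theorem mem_constantMatrices_of_zpow_mem [CharZero K] {a : SL(2, K[X])} {m : ℤ} (hm : m ≠ 0)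
    (hS : (S K[X] (m - 1)).eval (tr a) ≠ 0) (ha : a ^ m ∈ constantMatrices K) :
    a ∈ constantMatrices K := by
  have htr : tr a ∈ constants K := by
    refine mem_constants_of_eval_chebyshev_C hm ?_
    obtain ⟨b, hb⟩ := ha
    rw [← tr_zpow, ← hb, tr_map]
    exact C_mem_constants _
  rw [mem_constantMatrices_iff] at ha ⊢
  intro i j
  refine mem_constants_of_mul_mem hS ?_
  have hij : (S K[X] (m - 1)).eval (tr a) * a i j
      = (a ^ m) i j + (S K[X] (m - 2)).eval (tr a) * (1 : Matrix (Fin 2) (Fin 2) K[X]) i j := by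
    simp [coe_zpow]
  rw [hij]
  have hone : (1 : Matrix (Fin 2) (Fin 2) K[X]) i j ∈ constants K := by
    rw [Matrix.one_apply]; split_ifs
    exacts [one_mem _, zero_mem _]
  exact add_mem (ha i j) (mul_mem (eval_chebyshev_S_mem_constants htr _) hone)

end SL2

end Powers

namespace SL2

theorem continuous_tr {R : Type*} [CommRing R] [TopologicalSpace R] [IsTopologicalRing R] :
    Continuous (tr : SL(2, R) → R) :=
  continuous_subtype_val.matrix_trace

section Powers

open Polynomial.Chebyshev (S)

-- A nearby `m`-th root is found by first inverting the Chebyshev polynomial on traces.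
theorem map_zpow_nhds_eq {m : ℤ} (hm : m ≠ 0) {a : SL(2, ℂ)}
    (ha : (S ℂ (m - 1)).eval (tr a) ≠ 0) : map (· ^ m) (𝓝 a) = 𝓝 (a ^ m) := by
  refine le_antisymm (continuous_zpow m).continuousAt fun U hU => ?_
  obtain ⟨V, hV, hVU⟩ := mem_nhds_induced _ _ _ |>.1 (mem_map.1 hU)
  have hderiv := (Chebyshev.C ℂ m).hasStrictDerivAt (tr a)
  rw [eval_derivative_chebyshev_C] at hderiv
  have hne := mul_ne_zero (Int.cast_ne_zero.2 hm) ha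
  have hinv := hderiv.eventually_right_inverse hne
  have hcont := (hderiv.to_localInverse hne).hasDerivAt.continuousAt
  have hfix := (hderiv.eventually_left_inverse hne).self_of_nhds
  set h := hderiv.localInverse _ _ _ hne
  rw [← tr_zpow] at hinv hcont hfix
  have ht : ContinuousAt (fun b => h (tr b)) (a ^ m) :=
    hcont.comp (f := tr) continuous_tr.continuousAt
  have hS (k : ℤ) : ContinuousAt (fun b => (S ℂ k).eval (h (tr b))) (a ^ m) :=
    (S ℂ k).continuous.continuousAt.comp ht
  have hroot : ContinuousAt (fun b : SL(2, ℂ) => ((S ℂ (m - 1)).eval (h (tr b)))⁻¹ •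
      ((b : Matrix (Fin 2) (Fin 2) ℂ) + (S ℂ (m - 2)).eval (h (tr b)) • 1)) (a ^ m) :=
    ((hS _).inv₀ (by rwa [hfix])).smul
      (continuous_subtype_val.continuousAt.add ((hS _).smul continuousAt_const))
  have hV' : V ∈ 𝓝 (((S ℂ (m - 1)).eval (h (tr (a ^ m))))⁻¹ •
      ((↑(a ^ m) : Matrix (Fin 2) (Fin 2) ℂ) + (S ℂ (m - 2)).eval (h (tr (a ^ m))) • 1)) := by
    rwa [hfix, coe_zpow, sub_add_cancel, inv_smul_smul₀ ha]
  filter_upwards [continuous_tr.continuousAt.eventually hinv,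
    (hS (m - 1)).eventually_ne (by rwa [hfix]), hroot.eventually_mem hV'] with b hb hSb hbV
  obtain ⟨c, rfl, hc⟩ := exists_zpow_eq hb hSb
  exact hVU (show (c : Matrix (Fin 2) (Fin 2) ℂ) ∈ V by rwa [hc])

theorem eval_chebyshev_S_ne_zero_of_commutator {R : Type*} [CommRing R] {a b : SL(2, R)} {n m : ℤ}
    (h : ⁅a ^ n, b ^ m⁆ ≠ 1) :
    (S R (n - 1)).eval (tr a) ≠ 0 ∧ (S R (m - 1)).eval (tr b) ≠ 0 := by
  simp only [ne_eq, commutatorElement_eq_one_iff_commute] at h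
  exact ⟨fun ha => h (commute_zpow_of_eval_eq_zero ha _),
    fun hb => h (commute_zpow_of_eval_eq_zero hb _).symm⟩

theorem map_zpow_zpow_nhds_eq {n m : ℤ} (hn : n ≠ 0) (hm : m ≠ 0) {p : SL(2, ℂ) × SL(2, ℂ)}
    (hp : ⁅p.1 ^ n, p.2 ^ m⁆ ≠ 1) :
    map (Prod.map (· ^ n) (· ^ m)) (𝓝 p) = 𝓝 (p.1 ^ n, p.2 ^ m) := by
  obtain ⟨h₁, h₂⟩ := eval_chebyshev_S_ne_zero_of_commutator hp
  rw [nhds_prod_eq, ← prod_map_map_eq', map_zpow_nhds_eq hn h₁, map_zpow_nhds_eq hm h₂,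
    nhds_prod_eq]

end Powers

end SL2

section CommutatorFiber

/-- The pairs with a given commutator. -/
def commutatorFiber {G : Type*} [Group G] (g : G) : Set (G × G) := {p | ⁅p.1, p.2⁆ = g}

theorem tendsto_wordPerm_symm_nhdsWithin {G : Type*} [Group G] [TopologicalSpace G]
    [IsTopologicalGroup G] (g : G) (w : List NielsenMove) (p : G × G) :
    Tendsto (NielsenMove.wordPerm G w).symm (𝓝[commutatorFiber g] (NielsenMove.wordPerm G w p))
      (𝓝[commutatorFiber g] p) := by
  have hcont :=
    (NielsenMove.continuous_wordPerm_symm w).continuousAt (x := NielsenMove.wordPerm G w p)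
  rw [ContinuousAt, Equiv.symm_apply_apply] at hcont
  refine hcont.inf (tendsto_principal_principal.2 fun q hq => ?_)
  have h := NielsenMove.commutator_wordPerm w ((NielsenMove.wordPerm G w).symm q)
  rw [Equiv.apply_symm_apply] at h
  exact h.symm.trans hq

namespace SL2

theorem det_one_add_smul {R : Type*} [CommRing R] (a : SL(2, R)) (τ : R) :
    (1 + τ • (a : Matrix (Fin 2) (Fin 2) R)).det = 1 + τ * tr a + τ ^ 2 := by
  have h := det_entries a
  simp only [det_fin_two, Matrix.add_apply, one_apply_eq, Matrix.smul_apply, smul_eq_mul, ne_eq,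
    zero_ne_one, not_false_eq_true, one_apply_ne, zero_add, one_ne_zero, tr_eq]
  linear_combination τ ^ 2 * h

theorem trace_mul_one_add_smul_sq {R : Type*} [CommRing R] (a b : SL(2, R)) (τ : R) :
    trace ((b : Matrix (Fin 2) (Fin 2) R) * (1 + τ • (a : Matrix (Fin 2) (Fin 2) R)) ^ 2)
      = tr b + 2 * τ * tr (a * b) + τ ^ 2 * (tr a * tr (a * b) - tr b) := by
  have hsq : (1 + τ • (a : Matrix (Fin 2) (Fin 2) R)) ^ 2
      = (1 - τ ^ 2) • 1 + (2 * τ + τ ^ 2 * tr a) • (a : Matrix (Fin 2) (Fin 2) R) := by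
    simp only [sq, mul_add, add_mul, one_mul, mul_one, smul_mul_assoc, mul_smul_comm, coe_mul_self]
    module
  have htr : trace ((b : Matrix (Fin 2) (Fin 2) R) * (a : Matrix (Fin 2) (Fin 2) R))
      = tr (a * b) := tr_mul_comm b a
  have htrb : trace (b : Matrix (Fin 2) (Fin 2) R) = tr b := rfl
  simp only [hsq, mul_add, trace_add, mul_smul_comm, trace_smul, mul_one, htr, htrb,
    smul_eq_mul]
  ring

-- The elements `(1 + τ a)² / det (1 + τ a)` form a curve in the centralizer of `a`.
theorem eventually_tr_relation_of_twist {K : Type*} [NontriviallyNormedField K] {a b : SL(2, K)}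
    (h : ∀ᶠ c in 𝓝 (1 : SL(2, K)), Commute c a → tr (b * c) = tr b) :
    ∀ᶠ τ in 𝓝[≠] (0 : K),
      2 * tr (a * b) - tr a * tr b + τ * (tr a * tr (a * b) - 2 * tr b) = 0 := by
  obtain ⟨V, hV, hVh⟩ := mem_nhds_induced _ _ _ |>.1 h
  let A : Matrix (Fin 2) (Fin 2) K := a
  have hdet : ContinuousAt (fun τ : K => (1 + τ • A).det) 0 :=
    Continuous.continuousAt (by fun_prop)
  have hdet0 : (1 + (0 : K) • A).det ≠ 0 := by
    rw [zero_smul, add_zero, det_one]; exact one_ne_zero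
  have hcurve : ContinuousAt (fun τ : K => (1 + τ • A).det⁻¹ • (1 + τ • A) ^ 2) 0 :=
    (hdet.inv₀ hdet0).smul (Continuous.continuousAt (by fun_prop))
  have hV' : V ∈ 𝓝 ((1 + (0 : K) • A).det⁻¹ • (1 + (0 : K) • A) ^ 2) := by
    simpa only [zero_smul, add_zero, det_one, inv_one, one_smul, one_pow,
      Matrix.SpecialLinearGroup.coe_one] using hV
  filter_upwards [nhdsWithin_le_nhds (hcurve.eventually_mem hV'),
    nhdsWithin_le_nhds (hdet.eventually_ne hdet0), self_mem_nhdsWithin] with τ hτV hτ hτ0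
  let c : SL(2, K) := ⟨(1 + τ • A).det⁻¹ • (1 + τ • A) ^ 2, by
    rw [det_smul, det_pow, Fintype.card_fin, ← mul_pow, inv_mul_cancel₀ hτ, one_pow]⟩
  have hcomm : Commute c a := Subtype.ext
    ((((Commute.one_left A).add_left ((Commute.refl A).smul_left τ)).pow_left 2).smul_left _)
  have htr : (1 + τ • A).det⁻¹ * trace ((b : Matrix (Fin 2) (Fin 2) K) * (1 + τ • A) ^ 2)
      = tr b := by
    rw [← smul_eq_mul, ← trace_smul, ← mul_smul_comm]
    exact hVh (show (c : Matrix (Fin 2) (Fin 2) K) ∈ V from hτV) hcomm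
  rw [inv_mul_eq_iff_eq_mul₀ hτ, trace_mul_one_add_smul_sq, det_one_add_smul] at htr
  refine (mul_eq_zero.1 ?_).resolve_left hτ0
  linear_combination htr

theorem tr_relations_of_twist {K : Type*} [NontriviallyNormedField K] {a b : SL(2, K)}
    (h : ∀ᶠ c in 𝓝 (1 : SL(2, K)), Commute c a → tr (b * c) = tr b) :
    2 * tr (a * b) = tr a * tr b ∧ tr a * tr (a * b) = 2 * tr b := by
  have hlin := eventually_tr_relation_of_twist h
  have hconst : 2 * tr (a * b) - tr a * tr b = 0 := by
    have hlim : Tendsto (fun τ : K => 2 * tr (a * b) - tr a * tr b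
        + τ * (tr a * tr (a * b) - 2 * tr b)) (𝓝[≠] 0) (𝓝 (2 * tr (a * b) - tr a * tr b)) := by
      refine (Continuous.tendsto' (by fun_prop) _ _ ?_).mono_left nhdsWithin_le_nhds
      rw [zero_mul, add_zero]
    exact tendsto_nhds_unique_of_eventuallyEq hlim tendsto_const_nhds hlin
  obtain ⟨τ, hτ, hτ0⟩ := (hlin.and self_mem_nhdsWithin).exists
  rw [hconst, zero_add] at hτ
  exact ⟨sub_eq_zero.1 hconst, sub_eq_zero.1 ((mul_eq_zero.1 hτ).resolve_left hτ0)⟩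

end SL2
end CommutatorFiber

section CommutatorFiberTraces

variable {K : Type*} [NontriviallyNormedField K] [CharZero K]

theorem SL2.tr_eq_zero_of_twist {a b : SL(2, K)} (hab : SL2.tr ⁅a, b⁆ ≠ 2)
    (h : ∀ᶠ c in 𝓝 (1 : SL(2, K)), Commute c a → SL2.tr (b * c) = SL2.tr b) :
    SL2.tr b = 0 ∧ SL2.tr a ^ 2 = SL2.tr ⁅a, b⁆ + 2 := by
  obtain ⟨h₁, h₂⟩ := SL2.tr_relations_of_twist h
  have hκ := SL2.tr_commutator a b
  have hfour : (4 : K) ≠ 0 := OfNat.ofNat_ne_zero 4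
  have hX : SL2.tr a ^ 2 ≠ 4 := fun hX => hab <| mul_left_cancel₀ hfour <| by
    linear_combination 4 * hκ + (4 - SL2.tr b ^ 2) * hX
      + (2 * SL2.tr (a * b) - SL2.tr a * SL2.tr b) * h₁
  have hY : SL2.tr b = 0 := (mul_eq_zero.1 (show (SL2.tr a ^ 2 - 4) * SL2.tr b = 0 by
    linear_combination 2 * h₂ - SL2.tr a * h₁)).resolve_left (sub_ne_zero.2 hX)
  have hZ : SL2.tr (a * b) = 0 := (mul_eq_zero.1 (h₁.trans (by rw [hY, mul_zero]))).resolve_left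
    two_ne_zero
  rw [hY, hZ] at hκ
  exact ⟨hY, by linear_combination -hκ⟩

variable {g : SL(2, K)} {p : SL(2, K) × SL(2, K)} {E : Set K}

theorem tr_snd_eq_zero_of_eventually_mem (hg : SL2.tr g ≠ 2) (hE : E.Finite)
    (hp : p ∈ commutatorFiber g) (h : ∀ᶠ q in 𝓝[commutatorFiber g] p, SL2.tr q.2 ∈ E) :
    SL2.tr p.2 = 0 ∧ SL2.tr p.1 ^ 2 = SL2.tr g + 2 := by
  obtain ⟨a, b⟩ := p
  obtain rfl : ⁅a, b⁆ = g := hp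
  have hlim : Tendsto (fun c => (a, b * c)) (𝓝 1) (𝓝 (a, b)) :=
    Continuous.tendsto' (by fun_prop) _ _ (by rw [mul_one])
  have hsep : ∀ᶠ q : SL(2, K) × SL(2, K) in 𝓝 (a, b), SL2.tr q.2 ∉ E \ {SL2.tr b} :=
    (SL2.continuous_tr.comp continuous_snd).continuousAt.eventually_mem
      (hE.sdiff.isClosed.isOpen_compl.mem_nhds
        (show SL2.tr b ∉ E \ {SL2.tr b} from fun h => h.2 rfl))
  refine SL2.tr_eq_zero_of_twist hg ?_
  filter_upwards [hlim.eventually (eventually_nhdsWithin_iff.1 h), hlim.eventually hsep]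
    with c hc hcs hcomm
  have hmem : SL2.tr (b * c) ∈ E := hc <| by
    change ⁅a, b * c⁆ = ⁅a, b⁆
    simp only [commutatorElement_def, _root_.mul_inv_rev, mul_assoc, hcomm.inv_right.left_comm,
      mul_inv_cancel_left]
  by_contra hne
  exact hcs ⟨hmem, hne⟩

theorem finite_setOf_sq_mem {R : Type*} [CommRing R] [IsDomain R] {E : Set R} (hE : E.Finite) :
    {x : R | x ^ 2 ∈ E}.Finite := by
  classical
  refine hE.preimage' fun c _ => (nthRoots 2 c).toFinset.finite_toSet.subset fun x hx => ?_
  simpa only [Finset.mem_coe, Multiset.mem_toFinset, mem_nthRoots two_pos] using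
    show x ^ 2 = c from hx

-- If the trace of `p.2` were locally finite-valued, the trace of `p.1` would be locally constant up
-- to sign, and `tr_snd_eq_zero_of_eventually_mem` would apply to the rotated pair as well.
theorem frequently_tr_snd_notMem (hg : SL2.tr g ≠ 2) (hg' : SL2.tr g ≠ -2) (hE : E.Finite)
    (hp : p ∈ commutatorFiber g) : ∃ᶠ q in 𝓝[commutatorFiber g] p, SL2.tr q.2 ∉ E := by
  intro h
  simp only [not_not] at h
  have hnear : ∀ᶠ q in 𝓝[commutatorFiber g] p, SL2.tr q.1 ^ 2 ∈ ({SL2.tr g + 2} : Set K) := by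
    filter_upwards [eventually_eventually_nhdsWithin.2 h, self_mem_nhdsWithin] with q hq hqF
    exact (tr_snd_eq_zero_of_eventually_mem hg hE hqF hq).2
  have hrot : ∀ᶠ q in 𝓝[commutatorFiber g] NielsenMove.wordPerm _ [.rotate] p,
      SL2.tr q.2 ^ 2 ∈ ({SL2.tr g + 2} : Set K) := by
    filter_upwards [(tendsto_wordPerm_symm_nhdsWithin g [.rotate] p).eventually hnear] with q hq
    obtain ⟨q, rfl⟩ := (NielsenMove.wordPerm _ [.rotate]).surjective q
    rwa [Equiv.symm_apply_apply, ← NielsenMove.tr_snd_rotate] at hq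
  have hp' := (NielsenMove.commutator_wordPerm [.rotate] p).trans hp
  have hX := (tr_snd_eq_zero_of_eventually_mem hg
    (finite_setOf_sq_mem (Set.finite_singleton _)) hp' hrot).1
  have hκ := (tr_snd_eq_zero_of_eventually_mem hg hE hp h).2
  rw [NielsenMove.wordPerm_cons, NielsenMove.wordPerm_nil, NielsenMove.tr_snd_rotate] at hX
  exact hg' (by linear_combination SL2.tr p.1 * hX - hκ)

theorem frequently_tr_wordPerm_notMem (hg : SL2.tr g ≠ 2) (hg' : SL2.tr g ≠ -2) (hE : E.Finite)
    (hp : p ∈ commutatorFiber g) (w : List NielsenMove) :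
    ∃ᶠ q in 𝓝[commutatorFiber g] p, SL2.tr (NielsenMove.wordPerm _ w q).2 ∉ E := by
  refine (tendsto_wordPerm_symm_nhdsWithin g w p).frequently ?_
  simp only [Equiv.apply_symm_apply]
  exact frequently_tr_snd_notMem hg hg' hE ((NielsenMove.commutator_wordPerm w p).trans hp)

end CommutatorFiberTraces

section SolutionSet

variable {n m : ℤ} {g : SL2C}

theorem mem_solSet_iff {p : SL2C × SL2C} :
    p ∈ solSet n m g ↔ (p.1 ^ n, p.2 ^ m) ∈ commutatorFiber g := by
  simp only [solSet, commutatorFiber, Set.mem_ofPred_eq, commutatorElement_def, _root_.zpow_neg]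

theorem isClosed_solSet : IsClosed (solSet n m g) :=
  isClosed_eq (by fun_prop) continuous_const

instance : LocallyCompactSpace SL2C :=
  have : LocallyCompactSpace (Matrix (Fin 2) (Fin 2) ℂ) :=
    inferInstanceAs (LocallyCompactSpace (Fin 2 → Fin 2 → ℂ))
  (isClosed_eq (Continuous.matrix_det continuous_id)
    continuous_const).isClosedEmbedding_subtypeVal.locallyCompactSpace

instance : BaireSpace (solSet n m g) :=
  have : LocallyCompactSpace (solSet n m g) :=
    isClosed_solSet.isClosedEmbedding_subtypeVal.locallyCompactSpace
  inferInstance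

theorem nhdsWithin_commutatorFiber_le (hn : n ≠ 0) (hm : m ≠ 0) (hg : g ≠ 1)
    (q : solSet n m g) :
    𝓝[commutatorFiber g] (q.1.1 ^ n, q.1.2 ^ m) ≤ map (fun q => (q.1.1 ^ n, q.1.2 ^ m)) (𝓝 q) := by
  have hq : ⁅q.1.1 ^ n, q.1.2 ^ m⁆ = g := mem_solSet_iff.1 q.2
  have hpre : Prod.map (· ^ n) (· ^ m) ⁻¹' commutatorFiber g = solSet n m g :=
    Set.ext fun _ => mem_solSet_iff.symm
  have hval : map (fun q : solSet n m g => (q.1.1 ^ n, q.1.2 ^ m)) (𝓝 q)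
      = map (Prod.map (· ^ n) (· ^ m)) (𝓝[solSet n m g] q.1) := by
    rw [← map_nhds_subtype_val, Filter.map_map]
    rfl
  rw [hval, nhdsWithin, ← SL2.map_zpow_zpow_nhds_eq hn hm (hq.trans_ne hg),
    ← map_inf_principal_preimage, hpre, nhdsWithin]

/-- The points of `S` at which the traces of all words `w` in `(xⁿ, yᵐ)` avoid the values for which
the Fricke relation degenerates. -/
def traceGenericPoints (n m : ℤ) (g : SL2C) : Set (solSet n m g) :=
  {q | ∀ w, SL2.tr (NielsenMove.wordPerm _ w (q.1.1 ^ n, q.1.2 ^ m)).2 ^ 2 ∉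
    ({SL2.tr g + 2, 4} : Set ℂ)}

theorem dense_traceGenericPoints (hn : n ≠ 0) (hm : m ≠ 0) (hg : SL2.tr g ≠ 2)
    (hg' : SL2.tr g ≠ -2) :
    Dense (traceGenericPoints n m g) := by
  have hE : {x : ℂ | x ^ 2 ∈ ({SL2.tr g + 2, 4} : Set ℂ)}.Finite :=
    finite_setOf_sq_mem (Set.toFinite _)
  rw [traceGenericPoints, Set.ofPred_forall]
  refine dense_iInter_of_isOpen (fun w => ?_) (fun w q => ?_)
  · refine hE.isClosed.isOpen_compl.preimage (SL2.continuous_tr.comp (continuous_snd.comp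
      ((NielsenMove.continuous_wordPerm w).comp ?_)))
    fun_prop
  · rw [mem_closure_iff_frequently]
    have hfreq := frequently_tr_wordPerm_notMem hg hg' hE (mem_solSet_iff.1 q.2) w
    exact frequently_map.1 (hfreq.filter_mono
      (nhdsWithin_commutatorFiber_le hn hm (SL2.ne_one_of_tr_ne_two hg) q))

end SolutionSet

namespace coordRing

variable {n m : ℤ} {g : SL2C}

/-- The evaluation homomorphism at a point of `S`. -/
noncomputable def eval (q : solSet n m g) : coordRing n m g →+* ℂ :=
  (Pi.evalRingHom _ q).comp (coordRing n m g).val.toRingHom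

theorem ext_of_eval {a b : coordRing n m g} (h : ∀ q, eval q a = eval q b) : a = b :=
  Subtype.ext (funext h)

/-- The matrix of entry functions of the first component `x`, as a matrix over `O(S)`. -/
noncomputable def genericFst (n m : ℤ) (g : SL2C) : SL(2, coordRing n m g) :=
  ⟨.of fun i j => ⟨fun q => q.1.1 i j, Algebra.subset_adjoin (.inl ⟨(i, j), rfl⟩)⟩,
    ext_of_eval fun q => by
      rw [RingHom.map_det]
      exact q.1.1.det_coe⟩

/-- The matrix of entry functions of the second component `y`, as a matrix over `O(S)`. -/
noncomputable def genericSnd (n m : ℤ) (g : SL2C) : SL(2, coordRing n m g) :=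
  ⟨.of fun i j => ⟨fun q => q.1.2 i j, Algebra.subset_adjoin (.inr ⟨(i, j), rfl⟩)⟩,
    ext_of_eval fun q => by
      rw [RingHom.map_det]
      exact q.1.2.det_coe⟩

theorem map_eval_genericFst (q : solSet n m g) :
    Matrix.SpecialLinearGroup.map (eval q) (genericFst n m g) = q.1.1 := rfl

theorem map_eval_genericSnd (q : solSet n m g) :
    Matrix.SpecialLinearGroup.map (eval q) (genericSnd n m g) = q.1.2 := rfl

theorem commutator_generic : ⁅genericFst n m g ^ n, genericSnd n m g ^ m⁆
    = Matrix.SpecialLinearGroup.map (algebraMap ℂ (coordRing n m g)) g := by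
  refine Subtype.ext (Matrix.ext fun i j => ext_of_eval fun q => ?_)
  have hq : Matrix.SpecialLinearGroup.map (eval q) ⁅genericFst n m g ^ n, genericSnd n m g ^ m⁆
      = g := by
    rw [map_commutatorElement, map_zpow, map_zpow, map_eval_genericFst, map_eval_genericSnd]
    exact mem_solSet_iff.1 q.2
  exact congrArg (fun a : SL2C => a i j) hq

theorem induction {P : coordRing n m g → Prop}
    (algebraMap : ∀ c, P (algebraMap ℂ _ c))
    (fst : ∀ i j, P (genericFst n m g i j)) (snd : ∀ i j, P (genericSnd n m g i j))
    (add : ∀ a b, P a → P b → P (a + b)) (mul : ∀ a b, P a → P b → P (a * b))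
    (a : coordRing n m g) : P a := by
  obtain ⟨a, ha⟩ := a
  induction ha using Algebra.adjoin_induction with
  | mem x hx =>
    rcases hx with ⟨⟨i, j⟩, rfl⟩ | ⟨⟨i, j⟩, rfl⟩
    exacts [fst i j, snd i j]
  | algebraMap c => exact algebraMap c
  | add x y _ _ hx hy => exact add _ _ hx hy
  | mul x y _ _ hx hy => exact mul _ _ hx hy

theorem continuous_eval (a : coordRing n m g) : Continuous fun q => eval q a := by
  have hval : Continuous (Subtype.val : solSet n m g → SL2C × SL2C) := continuous_subtype_val
  induction a using induction with
  | algebraMap c => exact continuous_const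
  | fst i j => exact (continuous_subtype_val.comp hval.fst).matrix_elem i j
  | snd i j => exact (continuous_subtype_val.comp hval.snd).matrix_elem i j
  | add a b ha hb => exact (ha.add hb).congr fun q => (map_add (eval q) a b).symm
  | mul a b ha hb => exact (ha.mul hb).congr fun q => (map_mul (eval q) a b).symm

variable {D : Derivation ℂ (coordRing n m g) (coordRing n m g)} (hD : IsLocallyNilpotent D)

theorem commutator_orbitMap (q : solSet n m g) :
    ⁅Matrix.SpecialLinearGroup.map (hD.orbitMap (eval q)) (genericFst n m g) ^ n,
      Matrix.SpecialLinearGroup.map (hD.orbitMap (eval q)) (genericSnd n m g) ^ m⁆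
      = Matrix.SpecialLinearGroup.map C g := by
  rw [← map_zpow, ← map_zpow, ← map_commutatorElement, commutator_generic]
  refine Subtype.ext (Matrix.ext fun i j => ?_)
  exact hD.orbitMap_algebraMap (eval q) (g i j)

theorem tr_wordPerm_of_orbitMap (q : solSet n m g) (w : List NielsenMove) {η : ℂ}
    (h : SL2.tr (NielsenMove.wordPerm _ w
      (Matrix.SpecialLinearGroup.map (hD.orbitMap (eval q)) (genericFst n m g) ^ n,
        Matrix.SpecialLinearGroup.map (hD.orbitMap (eval q)) (genericSnd n m g) ^ m)).2 = C η) :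
    SL2.tr (NielsenMove.wordPerm _ w (q.1.1 ^ n, q.1.2 ^ m)).2 = η := by
  have hword {R : Type} [CommRing R] (f : coordRing n m g →+* R) :
      SL2.tr (NielsenMove.wordPerm _ w (Matrix.SpecialLinearGroup.map f (genericFst n m g) ^ n,
        Matrix.SpecialLinearGroup.map f (genericSnd n m g) ^ m)).2
      = f (SL2.tr (NielsenMove.wordPerm _ w (genericFst n m g ^ n, genericSnd n m g ^ m)).2) := by
    rw [← map_zpow, ← map_zpow, ← SL2.tr_map]
    exact congrArg (fun p => SL2.tr p.2) (NielsenMove.wordPerm_map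
      (Matrix.SpecialLinearGroup.map f) w (genericFst n m g ^ n, genericSnd n m g ^ m))
  have hcoeff := hD.coeff_orbitMap (eval q)
    (SL2.tr (NielsenMove.wordPerm _ w (genericFst n m g ^ n, genericSnd n m g ^ m)).2) 0
  rw [← hword, h, coeff_C_zero, Function.iterate_zero_apply, Nat.factorial_zero, Nat.cast_one,
    div_one, ← hword] at hcoeff
  exact hcoeff.symm

theorem orbitMap_mem_constants (hn : n ≠ 0) (hm : m ≠ 0) (hg : SL2.tr g ≠ 2) (hg' : SL2.tr g ≠ -2)
    {q : solSet n m g} (hq : q ∈ traceGenericPoints n m g) (a : coordRing n m g) :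
    hD.orbitMap (eval q) a ∈ constants ℂ := by
  have hcomm := commutator_orbitMap hD q
  have hne : Matrix.SpecialLinearGroup.map C g ≠ 1 := SL2.ne_one_of_tr_ne_two <| by
    rw [SL2.tr_map, ← map_ofNat C 2]
    exact C_injective.ne hg
  obtain ⟨hSx, hSy⟩ := SL2.eval_chebyshev_S_ne_zero_of_commutator (hcomm.trans_ne hne)
  obtain ⟨hxn, hym⟩ := Subgroup.mem_prod.1 <|
    mem_constantMatrices_of_commutator (p := (_, _)) hg hg' hcomm fun w η hη => by
      have h := hq w
      rwa [tr_wordPerm_of_orbitMap hD q w hη, Set.mem_insert_iff, Set.mem_singleton_iff,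
        not_or] at h
  have hx := mem_constantMatrices_iff.1 (SL2.mem_constantMatrices_of_zpow_mem hn hSx hxn)
  have hy := mem_constantMatrices_iff.1 (SL2.mem_constantMatrices_of_zpow_mem hm hSy hym)
  induction a using induction with
  | algebraMap c => exact hD.orbitMap_algebraMap (eval q) c ▸ C_mem_constants _
  | fst i j => exact hx i j
  | snd i j => exact hy i j
  | add a b ha hb => exact map_add (hD.orbitMap (eval q)) a b ▸ add_mem ha hb
  | mul a b ha hb => exact map_mul (hD.orbitMap (eval q)) a b ▸ mul_mem ha hb

end coordRing

/-- the Makar-Limanov invariant of `S` is all of `O(S)`: every locally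
nilpotent `ℂ`-derivation of `O(S)` is zero, i.e. `S` admits no nontrivial `ℂ⁺`-actions. -/
theorem makar_limanov_trivial (n m : ℤ) (hn : n ≠ 0) (hm : m ≠ 0)
    (g : SL2C) (hg : tr2 g ≠ 2) (hg' : tr2 g ≠ -2)
    (D : Derivation ℂ (coordRing n m g) (coordRing n m g))
    (hD : ∀ a : coordRing n m g, ∃ k : ℕ, (⇑D)^[k] a = 0) :
    D = 0 := by
  have hzero (a : coordRing n m g) : Set.EqOn (fun q => coordRing.eval q (D a)) 0
      (traceGenericPoints n m g) := fun q hq =>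
    IsLocallyNilpotent.map_apply_eq_zero hD (coordRing.eval q)
      (coordRing.orbitMap_mem_constants hD hn hm hg hg' hq a)
  ext a : 1
  exact coordRing.ext_of_eval <| congrFun <| (coordRing.continuous_eval (D a)).ext_on
    (dense_traceGenericPoints hn hm hg hg') continuous_const (hzero a)
end

section
/- For every word w in the commutator subgroup [F₂,F₂] of the free group F₂ on two generators, there exists a polynomial Q ∈ ℤ[s,t,u] such that for all x, y ∈ SL(2,ℂ), writing s = tr x, t = tr y, u = tr(xy), one has tr(w(x,y)) − 2 = Q(s,t,u)·(s² + t² + u² − s·t·u − 4). -/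
open Matrix

/-- The evaluation of a word `w` in the free group on two generators at a pair
of matrices `x y ∈ SL(2,ℂ)`. -/
noncomputable def wordEval (w : FreeGroup (Fin 2)) (x y : SL2C) : SL2C :=
  FreeGroup.lift ![x, y] w

/-!
Fix `x y : SL(2, R)` and let `A` be the subring generated by `s = tr x`, `t = tr y`, `u = tr (xy)`.
By Cayley–Hamilton the `A`-span `L` of `1, x, y, xy` contains the value of every word. The form
`(a, b, c) ↦ tr ((ab - ba)c)` is alternating and vanishes when an argument is `1`, so on `L` it is a
determinant of coordinates times its value at `(x, y, xy)`, which is `s² + t² + u² - stu - 4`. Hence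
modulo the `A`-multiples of this element `tr (abc) = tr (bac)` for all words `a`, `b`, `c`, so the
trace of a word depends only on its class in the abelianization. A generic pair makes the
coefficient in `A` uniform in `x` and `y`.
-/

open scoped MatrixGroups

theorem apply_mul_eq_of_mem_commutator {G α : Type*} [Group G] {f : G → α}
    (hf : ∀ a b c, f (a * b * c) = f (b * a * c)) {g : G} (hg : g ∈ commutator G) (c : G) :
    f (g * c) = f c := by
  rw [commutator_eq_closure] at hg
  induction hg using Subgroup.closure_induction generalizing c with
  | mem g hg =>
    obtain ⟨a, b, rfl⟩ := hg
    calc f (a * b * a⁻¹ * b⁻¹ * c) = f (a * b * (a⁻¹ * b⁻¹ * c)) := by simp only [mul_assoc]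
      _ = f (b * a * (a⁻¹ * b⁻¹ * c)) := hf _ _ _
      _ = f c := by group
  | one => rw [one_mul]
  | mul g h _ _ ihg ihh => rw [mul_assoc, ihg, ihh]
  | inv g _ ih => rw [← ih (g⁻¹ * c), mul_inv_cancel_left]

section TraceForm

variable {A M B : Type*} [CommRing A] [Ring M] [Algebra A M] [AddCommGroup B] [Module A B]

theorem exists_eq_of_mem_span_one_insert {x y z a : M}
    (ha : a ∈ Submodule.span A {1, x, y, z}) :
    ∃ a₀ a₁ a₂ a₃ : A, a = a₀ • 1 + a₁ • x + a₂ • y + a₃ • z := by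
  simp only [Submodule.mem_span_insert, Submodule.mem_span_singleton] at ha
  obtain ⟨a₀, _, ⟨a₁, _, ⟨a₂, _, ⟨a₃, rfl⟩, rfl⟩, rfl⟩, rfl⟩ := ha
  exact ⟨a₀, a₁, a₂, a₃, by simp only [add_assoc]⟩

theorem commutator_eq_of_coordinates (x y z : M) (a₀ a₁ a₂ a₃ b₀ b₁ b₂ b₃ : A) :
    (a₀ • 1 + a₁ • x + a₂ • y + a₃ • z) * (b₀ • 1 + b₁ • x + b₂ • y + b₃ • z) -
        (b₀ • 1 + b₁ • x + b₂ • y + b₃ • z) * (a₀ • 1 + a₁ • x + a₂ • y + a₃ • z) =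
      (a₁ * b₂ - a₂ * b₁) • (x * y - y * x) + (a₁ * b₃ - a₃ * b₁) • (x * z - z * x) +
        (a₂ * b₃ - a₃ * b₂) • (y * z - z * y) := by
  simp only [add_mul, mul_add, smul_mul_assoc, mul_smul_comm, one_mul, mul_one]
  module

theorem apply_commutator_mul_mem_span {τ : M →ₗ[A] B} (hτ : ∀ a b, τ (a * b) = τ (b * a))
    (x y z : M) {a b c : M} (ha : a ∈ Submodule.span A {1, x, y, z})
    (hb : b ∈ Submodule.span A {1, x, y, z}) (hc : c ∈ Submodule.span A {1, x, y, z}) :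
    τ ((a * b - b * a) * c) ∈ Submodule.span A {τ ((x * y - y * x) * z)} := by
  obtain ⟨a₀, a₁, a₂, a₃, rfl⟩ := exists_eq_of_mem_span_one_insert ha
  obtain ⟨b₀, b₁, b₂, b₃, rfl⟩ := exists_eq_of_mem_span_one_insert hb
  obtain ⟨c₀, c₁, c₂, c₃, rfl⟩ := exists_eq_of_mem_span_one_insert hc
  have cyclic (p q r : M) : τ (p * q * r) = τ (q * r * p) := by rw [mul_assoc, hτ]
  have apply_one (p q : M) : τ (p * q - q * p) = 0 := by rw [map_sub, hτ, sub_self]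
  have apply_left (p q : M) : τ ((p * q - q * p) * p) = 0 := by
    rw [sub_mul, map_sub, cyclic p q p, sub_self]
  have apply_right (p q : M) : τ ((p * q - q * p) * q) = 0 := by
    rw [sub_mul, map_sub, cyclic q p q, sub_self]
  have apply_rotate : τ ((y * z - z * y) * x) = τ ((x * y - y * x) * z) := by
    rw [sub_mul, sub_mul, map_sub, map_sub, cyclic x y z, cyclic z y x]
  have apply_swap : τ ((x * z - z * x) * y) = -τ ((x * y - y * x) * z) := by
    rw [sub_mul, sub_mul, map_sub, map_sub, cyclic x z y, cyclic x y z, cyclic z y x,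
      cyclic y z x, cyclic z x y, neg_sub]
  refine Submodule.mem_span_singleton.2
    ⟨!![a₁, a₂, a₃; b₁, b₂, b₃; c₁, c₂, c₃].det, ?_⟩
  rw [commutator_eq_of_coordinates, det_fin_three]
  simp only [add_mul, mul_add, smul_mul_assoc, mul_smul_comm, mul_one, map_add, map_smul,
    of_apply, cons_val, apply_one, apply_left, apply_right, apply_rotate, apply_swap]
  module

end TraceForm

theorem trace_specialLinearGroup_map {n R S : Type*} [Fintype n] [DecidableEq n] [CommRing R]
    [CommRing S] (f : R →+* S) (z : SpecialLinearGroup n R) :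
    trace (SpecialLinearGroup.map f z).1 = f (trace z.1) :=
  (AddMonoidHom.map_trace f z.1).symm

section FinTwo

variable {S : Type*} [CommRing S]

theorem adjugate_eq_trace_smul_one_sub (M : Matrix (Fin 2) (Fin 2) S) :
    adjugate M = trace M • 1 - M := by
  ext i j
  fin_cases i <;> fin_cases j <;> simp [adjugate_fin_two, trace_fin_two]

theorem mul_self_eq_trace_smul_sub_det_smul_one (M : Matrix (Fin 2) (Fin 2) S) :
    M * M = trace M • M - det M • 1 := by
  have h := mul_adjugate M
  rw [adjugate_eq_trace_smul_one_sub, mul_sub, mul_smul_comm, mul_one] at h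
  rw [← h, sub_sub_cancel]

theorem mul_swap_eq (M N : Matrix (Fin 2) (Fin 2) S) :
    N * M = (trace (M * N) - trace M * trace N) • 1 + trace N • M + trace M • N - M * N := by
  have h := adjugate_mul_distrib M N
  simp only [adjugate_eq_trace_smul_one_sub, sub_mul, mul_sub, smul_mul_assoc, mul_smul_comm,
    one_mul, mul_one] at h
  linear_combination (norm := module) (-1 : S) • h

theorem mul_sandwich_eq (M N : Matrix (Fin 2) (Fin 2) S) :
    N * (M * N) = trace (M * N) • N + det N • M - (trace M * det N) • 1 := by
  rw [← mul_assoc, mul_swap_eq M N]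
  simp only [sub_mul, add_mul, smul_mul_assoc, one_mul, mul_assoc M N N,
    mul_self_eq_trace_smul_sub_det_smul_one N, mul_sub, mul_smul_comm, mul_one]
  module

theorem trace_mul_self_eq (M : Matrix (Fin 2) (Fin 2) S) :
    trace (M * M) = trace M ^ 2 - 2 * det M := by
  rw [mul_self_eq_trace_smul_sub_det_smul_one, trace_sub, trace_smul, trace_smul, trace_one,
    smul_eq_mul, smul_eq_mul, Fintype.card_fin]
  ring

theorem trace_commutator_mul_eq (M N : Matrix (Fin 2) (Fin 2) S) :
    trace ((M * N - N * M) * (M * N)) =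
      det N * trace M ^ 2 + det M * trace N ^ 2 + trace (M * N) ^ 2 -
        trace M * trace N * trace (M * N) - 4 * (det M * det N) := by
  have trace_swap : trace (N * M * (M * N)) =
      trace M * trace N * trace (M * N) - det N * trace M ^ 2 - det M * trace N ^ 2 +
        2 * (det M * det N) := by
    rw [mul_assoc, trace_mul_comm, mul_assoc, mul_assoc, ← mul_assoc M,
      mul_self_eq_trace_smul_sub_det_smul_one M, mul_self_eq_trace_smul_sub_det_smul_one N]
    simp only [sub_mul, mul_sub, smul_mul_assoc, mul_smul_comm, one_mul, mul_one, trace_sub,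
      trace_smul, trace_one, smul_eq_mul, Fintype.card_fin]
    ring
  rw [sub_mul, trace_sub, trace_swap, trace_mul_self_eq, det_mul]
  ring

/-- The span of `1, M, N, MN` over a subring `A` of the base ring. When `A` contains the traces of
`M`, `N`, `MN` and `M`, `N` have determinant `1`, it contains the value of every word at `M, N`. -/
def wordSpan (A : Subring S) (M N : Matrix (Fin 2) (Fin 2) S) :
    Submodule A (Matrix (Fin 2) (Fin 2) S) :=
  Submodule.span A {1, M, N, M * N}

section WordSpan

variable {A : Subring S} {M N : Matrix (Fin 2) (Fin 2) S}

theorem smul_mem_wordSpan {r : S} (hr : r ∈ A) {P : Matrix (Fin 2) (Fin 2) S}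
    (hP : P ∈ wordSpan A M N) : r • P ∈ wordSpan A M N :=
  (wordSpan A M N).smul_mem ⟨r, hr⟩ hP

theorem one_mem_wordSpan : 1 ∈ wordSpan A M N :=
  Submodule.subset_span (by simp)

theorem left_mem_wordSpan : M ∈ wordSpan A M N :=
  Submodule.subset_span (by simp)

theorem right_mem_wordSpan : N ∈ wordSpan A M N :=
  Submodule.subset_span (by simp)

theorem mul_mem_wordSpan : M * N ∈ wordSpan A M N :=
  Submodule.subset_span (by simp)

theorem mul_mem_wordSpan_of_generators {P Q : Matrix (Fin 2) (Fin 2) S}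
    (h_one : P ∈ wordSpan A M N) (h_left : P * M ∈ wordSpan A M N)
    (h_right : P * N ∈ wordSpan A M N) (h_mul : P * (M * N) ∈ wordSpan A M N)
    (hQ : Q ∈ wordSpan A M N) : P * Q ∈ wordSpan A M N := by
  refine (Submodule.map_span_le (LinearMap.mulLeft A P) _ _).2 ?_ (Submodule.mem_map_of_mem hQ)
  rintro _ (rfl | rfl | rfl | rfl)
  exacts [by simpa using h_one, h_left, h_right, h_mul]

theorem left_mul_mem_wordSpan (hM : trace M ∈ A) (hdetM : det M ∈ A)
    {P : Matrix (Fin 2) (Fin 2) S} (hP : P ∈ wordSpan A M N) : M * P ∈ wordSpan A M N := by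
  refine mul_mem_wordSpan_of_generators left_mem_wordSpan ?_ mul_mem_wordSpan ?_ hP
  · rw [mul_self_eq_trace_smul_sub_det_smul_one]
    exact sub_mem (smul_mem_wordSpan hM left_mem_wordSpan)
      (smul_mem_wordSpan hdetM one_mem_wordSpan)
  · rw [← mul_assoc, mul_self_eq_trace_smul_sub_det_smul_one, sub_mul, smul_mul_assoc,
      smul_mul_assoc, one_mul]
    exact sub_mem (smul_mem_wordSpan hM mul_mem_wordSpan)
      (smul_mem_wordSpan hdetM right_mem_wordSpan)

theorem right_mul_mem_wordSpan (hM : trace M ∈ A) (hN : trace N ∈ A) (hMN : trace (M * N) ∈ A)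
    (hdetN : det N ∈ A) {P : Matrix (Fin 2) (Fin 2) S} (hP : P ∈ wordSpan A M N) :
    N * P ∈ wordSpan A M N := by
  refine mul_mem_wordSpan_of_generators right_mem_wordSpan ?_ ?_ ?_ hP
  · rw [mul_swap_eq]
    exact sub_mem (add_mem (add_mem
      (smul_mem_wordSpan (sub_mem hMN (mul_mem hM hN)) one_mem_wordSpan)
      (smul_mem_wordSpan hN left_mem_wordSpan)) (smul_mem_wordSpan hM right_mem_wordSpan))
      mul_mem_wordSpan
  · rw [mul_self_eq_trace_smul_sub_det_smul_one]
    exact sub_mem (smul_mem_wordSpan hN right_mem_wordSpan)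
      (smul_mem_wordSpan hdetN one_mem_wordSpan)
  · rw [mul_sandwich_eq]
    exact sub_mem (add_mem (smul_mem_wordSpan hMN right_mem_wordSpan)
      (smul_mem_wordSpan hdetN left_mem_wordSpan))
      (smul_mem_wordSpan (mul_mem hM hdetN) one_mem_wordSpan)

end WordSpan

section SpecialLinearGroup

variable {A : Subring S} {x y : SL(2, S)}

theorem coe_inv_mul_mem_wordSpan {g : SL(2, S)} (hg : trace g.1 ∈ A)
    {M N P : Matrix (Fin 2) (Fin 2) S} (hP : P ∈ wordSpan A M N)
    (hgP : g.1 * P ∈ wordSpan A M N) : (g⁻¹).1 * P ∈ wordSpan A M N := by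
  rw [Matrix.SpecialLinearGroup.coe_inv, adjugate_eq_trace_smul_one_sub, sub_mul,
    smul_mul_assoc, one_mul]
  exact sub_mem (smul_mem_wordSpan hg hP) hgP

theorem coe_mem_wordSpan_of_mem_closure (hx : trace x.1 ∈ A) (hy : trace y.1 ∈ A)
    (hxy : trace (x * y).1 ∈ A) {g : SL(2, S)} (hg : g ∈ Subgroup.closure {x, y}) :
    g.1 ∈ wordSpan A x.1 y.1 := by
  have det_mem (z : SL(2, S)) : det z.1 ∈ A := by
    rw [z.det_coe]
    exact one_mem A
  have generator_mul_mem {z : SL(2, S)} (hz : z ∈ ({x, y} : Set SL(2, S)))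
      {P : Matrix (Fin 2) (Fin 2) S} (hP : P ∈ wordSpan A x.1 y.1) :
      z.1 * P ∈ wordSpan A x.1 y.1 := by
    rcases hz with rfl | rfl
    · exact left_mul_mem_wordSpan hx (det_mem _) hP
    · exact right_mul_mem_wordSpan hx hy hxy (det_mem _) hP
  have generator_trace_mem {z : SL(2, S)} (hz : z ∈ ({x, y} : Set SL(2, S))) : trace z.1 ∈ A := by
    rcases hz with rfl | rfl <;> assumption
  induction hg using Subgroup.closure_induction_left with
  | one => exact one_mem_wordSpan
  | mul_left z hz g _ ih => exact generator_mul_mem hz ih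
  | inv_mul_cancel z hz g _ ih =>
    exact coe_inv_mul_mem_wordSpan (generator_trace_mem hz) ih (generator_mul_mem hz ih)

theorem trace_sub_two_mem_span {G : Type*} [Group G] {φ : G →* SL(2, S)}
    (hφ : φ.range ≤ Subgroup.closure {x, y}) (hx : trace x.1 ∈ A) (hy : trace y.1 ∈ A)
    (hxy : trace (x * y).1 ∈ A) {g : G} (hg : g ∈ commutator G) :
    trace (φ g).1 - 2 ∈ Submodule.span A
      {trace x.1 ^ 2 + trace y.1 ^ 2 + trace (x * y).1 ^ 2 -
        trace x.1 * trace y.1 * trace (x * y).1 - 4} := by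
  have mem_wordSpan (a : G) : (φ a).1 ∈ wordSpan A x.1 y.1 :=
    coe_mem_wordSpan_of_mem_closure hx hy hxy (hφ ⟨a, rfl⟩)
  have trace_form_eq := trace_commutator_mul_eq x.1 y.1
  simp only [x.det_coe, y.det_coe, one_mul, mul_one] at trace_form_eq
  rw [Matrix.SpecialLinearGroup.coe_mul, ← trace_form_eq]
  let K := Submodule.span A {trace ((x.1 * y.1 - y.1 * x.1) * (x.1 * y.1))}
  have trace_swap_mem (a b c : G) : trace (φ (a * b * c)).1 - trace (φ (b * a * c)).1 ∈ K := by
    simpa only [map_mul, Matrix.SpecialLinearGroup.coe_mul, sub_mul, trace_sub,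
      traceLinearMap_apply, K] using
      apply_commutator_mul_mem_span (τ := traceLinearMap (Fin 2) A S) trace_mul_comm
        x.1 y.1 (x.1 * y.1) (mem_wordSpan a) (mem_wordSpan b) (mem_wordSpan c)
  have mk_trace_eq : K.mkQ (trace (φ (g * 1)).1) = K.mkQ (trace (φ 1).1) :=
    apply_mul_eq_of_mem_commutator (f := fun a ↦ K.mkQ (trace (φ a).1))
      (fun a b c ↦ (Submodule.Quotient.eq K).2 (trace_swap_mem a b c)) hg 1
  simpa [Submodule.Quotient.eq] using mk_trace_eq

/-- The traces `tr x, tr y, tr (xy)`: Fricke's coordinates on the character variety of the free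
group of rank two, at which the integer polynomials are evaluated. -/
def traceCoords (x y : SL(2, S)) : Fin 3 → S :=
  ![trace x.1, trace y.1, trace (x * y).1]

theorem exists_trace_sub_two_eq_aeval_mul {G : Type*} [Group G] {φ : G →* SL(2, S)}
    (hφ : φ.range ≤ Subgroup.closure {x, y}) {g : G} (hg : g ∈ commutator G) :
    ∃ Q : MvPolynomial (Fin 3) ℤ, trace (φ g).1 - 2 = MvPolynomial.aeval (traceCoords x y) Q *
      (trace x.1 ^ 2 + trace y.1 ^ 2 + trace (x * y).1 ^ 2 -
        trace x.1 * trace y.1 * trace (x * y).1 - 4) := by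
  let A := (MvPolynomial.aeval (R := ℤ) (traceCoords x y)).toRingHom.range
  have traceCoords_mem (i : Fin 3) : traceCoords x y i ∈ A :=
    ⟨.X i, MvPolynomial.aeval_X _ i⟩
  obtain ⟨⟨_, Q, rfl⟩, hQ⟩ := Submodule.mem_span_singleton.1 <|
    trace_sub_two_mem_span hφ (traceCoords_mem 0) (traceCoords_mem 1) (traceCoords_mem 2) hg
  exact ⟨Q, hQ.symm⟩

theorem aeval_traceCoords_map {R : Type*} [CommRing R] (f : S →+* R) (x y : SL(2, S))
    (Q : MvPolynomial (Fin 3) ℤ) :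
    MvPolynomial.aeval (traceCoords (SpecialLinearGroup.map f x) (SpecialLinearGroup.map f y)) Q =
      f (MvPolynomial.aeval (traceCoords x y) Q) := by
  have h_coords : traceCoords (SpecialLinearGroup.map f x) (SpecialLinearGroup.map f y) =
      fun i ↦ f.toIntAlgHom (traceCoords x y i) := by
    ext i
    fin_cases i
    · exact trace_specialLinearGroup_map f x
    · exact trace_specialLinearGroup_map f y
    · exact (congrArg (fun z ↦ trace z.1) (map_mul (SpecialLinearGroup.map f) x y).symm).trans
        (trace_specialLinearGroup_map f (x * y))
  rw [h_coords, ← MvPolynomial.comp_aeval_apply]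
  rfl

end SpecialLinearGroup

end FinTwo

theorem exists_generic_specialLinearGroup.{u, v, w} (ι : Type u) (n : Type v)
    [Fintype n] [DecidableEq n] :
    ∃ (S : Type (max u v)) (_ : CommRing S) (X : ι → SpecialLinearGroup n S),
      ∀ (R : Type w) [CommRing R] (x : ι → SpecialLinearGroup n R),
        ∃ f : S →+* R, ∀ i, SpecialLinearGroup.map f (X i) = x i := by
  let M (i : ι) : Matrix n n (MvPolynomial (ι × n × n) ℤ) := of fun j k ↦ .X (i, j, k)
  let I : Ideal (MvPolynomial (ι × n × n) ℤ) := Ideal.span (Set.range fun i ↦ det (M i) - 1)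
  have det_map_mk (i : ι) : det ((Ideal.Quotient.mk I).mapMatrix (M i)) = 1 := by
    rw [← RingHom.map_det, ← map_one (Ideal.Quotient.mk I), Ideal.Quotient.eq]
    exact Ideal.subset_span ⟨i, rfl⟩
  refine ⟨_ ⧸ I, inferInstance, fun i ↦ ⟨_, det_map_mk i⟩, fun R _ x ↦ ?_⟩
  let ev : MvPolynomial (ι × n × n) ℤ →+* R :=
    MvPolynomial.eval₂Hom (Int.castRingHom R) fun p ↦ x p.1 p.2.1 p.2.2
  have map_ev (i : ι) : ev.mapMatrix (M i) = x i := by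
    ext j k
    simp [ev, M]
  have ev_eq_zero : ∀ p ∈ I, ev p = 0 := by
    refine Ideal.span_le (I := RingHom.ker ev).2 ?_
    rintro _ ⟨i, rfl⟩
    simp [RingHom.mem_ker, RingHom.map_det, map_ev]
  exact ⟨Ideal.Quotient.lift I ev ev_eq_zero, fun i ↦ Subtype.ext (map_ev i)⟩

theorem trace_commutator_word_div_general (w : FreeGroup (Fin 2))
    (hw : w ∈ commutator (FreeGroup (Fin 2))) :
    ∃ Q : MvPolynomial (Fin 3) ℤ, ∀ (R : Type*) [CommRing R] (x y : SL(2, R)),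
      trace (FreeGroup.lift ![x, y] w).1 - 2 =
        MvPolynomial.aeval ![trace x.1, trace y.1, trace (x * y).1] Q *
          (trace x.1 ^ 2 + trace y.1 ^ 2 + trace (x * y).1 ^ 2 -
            trace x.1 * trace y.1 * trace (x * y).1 - 4) := by
  obtain ⟨S, _, Z, hZ⟩ := exists_generic_specialLinearGroup (Fin 2) (Fin 2)
  have lift_range_le : (FreeGroup.lift Z).range ≤ Subgroup.closure {Z 0, Z 1} :=
    FreeGroup.range_lift_le <| Set.range_subset_iff.2 <|
      Fin.forall_fin_two.2 ⟨Subgroup.subset_closure (by simp), Subgroup.subset_closure (by simp)⟩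
  obtain ⟨Q, hQ⟩ := exists_trace_sub_two_eq_aeval_mul lift_range_le hw
  refine ⟨Q, fun R _ x y ↦ ?_⟩
  obtain ⟨f, hf⟩ := hZ R ![x, y]
  have map_word : SpecialLinearGroup.map f (FreeGroup.lift Z w) = FreeGroup.lift ![x, y] w :=
    FreeGroup.lift_unique ((SpecialLinearGroup.map f).comp (FreeGroup.lift Z)) (by simpa using hf)
  obtain rfl : SpecialLinearGroup.map f (Z 0) = x := hf 0
  obtain rfl : SpecialLinearGroup.map f (Z 1) = y := hf 1
  have h_map := congrArg f hQ
  simp only [map_sub, map_add, map_mul, map_pow, map_ofNat, ← aeval_traceCoords_map,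
    ← trace_specialLinearGroup_map, map_word] at h_map
  exact h_map

/-- for `w ∈ [F₂,F₂]` there exists `Q ∈ ℤ[s,t,u]` with
`tr (w(x,y)) − 2 = Q(s,t,u)·(s² + t² + u² − s·t·u − 4)` where
`s = tr x`, `t = tr y`, `u = tr (xy)`. -/
theorem trace_commutator_word_div (w : FreeGroup (Fin 2))
    (hw : w ∈ commutator (FreeGroup (Fin 2))) :
    ∃ Q : MvPolynomial (Fin 3) ℤ,
      ∀ x y : SL2C,
        tr2 (wordEval w x y) - 2 =
          MvPolynomial.aeval ![tr2 x, tr2 y, tr2 (x * y)] Q *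
            (tr2 x ^ 2 + tr2 y ^ 2 + tr2 (x * y) ^ 2
              - tr2 x * tr2 y * tr2 (x * y) - 4) := by
  obtain ⟨Q, hQ⟩ := trace_commutator_word_div_general w hw
  exact ⟨Q, hQ ℂ⟩
end

section
/- Two matrices x, y ∈ SL(2,ℂ) have a common eigenvector (i.e., there exists a nonzero vector v ∈ ℂ² and scalars λ, μ ∈ ℂ with x·v = λ·v and y·v = μ·v) if and only if tr(x)² + tr(y)² + tr(xy)² − tr(x)·tr(y)·tr(xy) − 4 = 0. -/
open Matrix

/-!
A common eigenvector of `A` and `B` is killed by the commutator `N = ⁅A, B⁆`, so `det N = 0`.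
Conversely, let `det N = 0`. If `N = 0`, then `A` and `B` commute and have a common eigenvector.
If `N ≠ 0`, then `N` has rank one, so `N * M * N = tr (N * M) • N` for every `M`; the traces of `N`,
`N * A` and `N * B` vanish, so for a nonzero column `u` of `N` the vectors `u`, `A u`, `B u` all lie
in the line `ker N`. The condition on the traces is `det N = 0` written out.
-/

section CommonEigenvector

variable {n R : Type*} [Fintype n] [CommRing R]

/-- The matrices `A` and `B` have a common eigenvector, possibly for different eigenvalues. -/
def HasCommonEigenvector (A B : Matrix n n R) : Prop :=
  ∃ v : n → R, v ≠ 0 ∧ ∃ lam mu : R, A *ᵥ v = lam • v ∧ B *ᵥ v = mu • v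

lemma HasCommonEigenvector.det_lie_eq_zero [DecidableEq n] [IsDomain R] {A B : Matrix n n R}
    (h : HasCommonEigenvector A B) : ⁅A, B⁆.det = 0 := by
  obtain ⟨v, hv, lam, mu, hA, hB⟩ := h
  refine exists_mulVec_eq_zero_iff.mp ⟨v, hv, ?_⟩
  rw [Ring.lie_def, sub_mulVec, ← mulVec_mulVec, ← mulVec_mulVec, hA, hB, mulVec_smul,
    mulVec_smul, hA, hB, smul_comm, sub_self]

end CommonEigenvector

lemma trace_lie_mul {n R : Type*} [Fintype n] [CommRing R] (A B C : Matrix n n R) :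
    (⁅A, B⁆ * C).trace = (A * ⁅B, C⁆).trace := by
  rw [Ring.lie_def, Ring.lie_def, sub_mul, mul_sub, trace_sub, trace_sub, mul_assoc, mul_assoc,
    trace_mul_comm B, mul_assoc]

open Module End in
lemma exists_common_hasEigenvector_of_commute {K V : Type*} [Field K] [IsAlgClosed K]
    [AddCommGroup V] [Module K V] [FiniteDimensional K V] [Nontrivial V] {f g : End K V}
    (hfg : Commute f g) :
    ∃ (v : V) (lam mu : K), f.HasEigenvector lam v ∧ g.HasEigenvector mu v := by
  obtain ⟨lam, hlam⟩ := exists_eigenvalue f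
  have hmaps : Set.MapsTo g (f.eigenspace lam) (f.eigenspace lam) :=
    mapsTo_genEigenspace_of_comm hfg lam 1
  have : Nontrivial (f.eigenspace lam) := Submodule.nontrivial_iff_ne_bot.mpr hlam
  obtain ⟨mu, hmu⟩ := exists_eigenvalue (g.restrict hmaps)
  obtain ⟨v, hv⟩ := hmu.exists_hasEigenvector
  have hv0 : (v : V) ≠ 0 := Subtype.coe_ne_coe.mpr hv.2
  exact ⟨v, lam, mu, ⟨v.2, hv0⟩, mem_eigenspace_iff.mpr (congrArg Subtype.val hv.apply_eq_smul),
    hv0⟩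

lemma hasCommonEigenvector_of_commute {n K : Type*} [Fintype n] [Nonempty n]
    [Field K] [IsAlgClosed K] {A B : Matrix n n K} (hAB : Commute A B) :
    HasCommonEigenvector A B := by
  have hlin : Commute A.mulVecLin B.mulVecLin := by
    rw [commute_iff_eq, Module.End.mul_eq_comp, Module.End.mul_eq_comp, ← mulVecLin_mul,
      ← mulVecLin_mul, hAB.eq]
  obtain ⟨v, lam, mu, hA, hB⟩ := exists_common_hasEigenvector_of_commute hlin
  exact ⟨v, hA.2, lam, mu, hA.apply_eq_smul, hB.apply_eq_smul⟩

lemma exists_smul_eq_of_map_eq_zero_of_finrank_eq_two {K V W : Type*} [DivisionRing K]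
    [AddCommGroup V] [Module K V] [AddCommGroup W] [Module K W] (hV : Module.finrank K V = 2)
    {f : V →ₗ[K] W} (hf : f ≠ 0) {u w : V} (hu : u ≠ 0) (hfu : f u = 0) (hfw : f w = 0) :
    ∃ c : K, c • u = w := by
  by_contra! hne
  have hindep : LinearIndependent K ![u, w] := (LinearIndependent.pair_iff' hu).mpr hne
  refine hf ((basisOfLinearIndependentOfCardEqFinrank hindep (by simp [hV])).ext fun i ↦ ?_)
  fin_cases i <;> simp [hfu, hfw]

section FinTwo

lemma mul_mul_self_add_det_smul_adjugate {R : Type*} [CommRing R] (N M : Matrix (Fin 2) (Fin 2) R) :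
    N * M * N + N.det • M.adjugate = (N * M).trace • N := by
  ext i j
  fin_cases i <;> fin_cases j <;>
    simp [mul_apply, det_fin_two, trace_fin_two, adjugate_fin_two, Fin.sum_univ_two] <;> ring

lemma det_lie_fin_two {R : Type*} [CommRing R] (A B : Matrix (Fin 2) (Fin 2) R) :
    ⁅A, B⁆.det = -(A.trace ^ 2 * B.det + B.trace ^ 2 * A.det + (A * B).trace ^ 2
      - A.trace * B.trace * (A * B).trace - 4 * (A.det * B.det)) := by
  simp only [Ring.lie_def, det_fin_two, trace_fin_two, Matrix.sub_apply, mul_apply,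
    Fin.sum_univ_two]
  ring

variable {K : Type*} [Field K]

lemma exists_mulVec_eq_smul_of_trace_mul_eq_zero {N A : Matrix (Fin 2) (Fin 2) K}
    (hdet : N.det = 0) (htr : N.trace = 0) (hNA : (N * A).trace = 0) {z : Fin 2 → K}
    (hz : N *ᵥ z ≠ 0) : ∃ c : K, A *ᵥ (N *ᵥ z) = c • N *ᵥ z := by
  have hNMN {M : Matrix (Fin 2) (Fin 2) K} (hM : (N * M).trace = 0) :
      N *ᵥ (M *ᵥ (N *ᵥ z)) = 0 := by
    have hmul := mul_mul_self_add_det_smul_adjugate N M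
    rw [hdet, hM, zero_smul, zero_smul, add_zero] at hmul
    rw [mulVec_mulVec, mulVec_mulVec, hmul, zero_mulVec]
  have hN : N.mulVecLin ≠ 0 := fun h ↦ hz (LinearMap.congr_fun h z)
  have hNN : N *ᵥ (N *ᵥ z) = 0 := by simpa using hNMN (M := 1) (by simpa using htr)
  obtain ⟨c, hc⟩ :=
    exists_smul_eq_of_map_eq_zero_of_finrank_eq_two (by simp) hN hz hNN (hNMN hNA)
  exact ⟨c, hc.symm⟩

lemma hasCommonEigenvector_iff_det_lie_eq_zero [IsAlgClosed K] {A B : Matrix (Fin 2) (Fin 2) K} :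
    HasCommonEigenvector A B ↔ ⁅A, B⁆.det = 0 := by
  refine ⟨HasCommonEigenvector.det_lie_eq_zero, fun hdet ↦ ?_⟩
  by_cases hzero : ⁅A, B⁆ = 0
  · exact hasCommonEigenvector_of_commute (commute_iff_lie_eq.mpr hzero)
  · obtain ⟨z, hz⟩ : ∃ z, ⁅A, B⁆ *ᵥ z ≠ 0 := by
      contrapose! hzero
      exact ext_of_mulVec_single fun i ↦ by rw [hzero, zero_mulVec]
    have htr : ⁅A, B⁆.trace = 0 := LieAlgebra.matrix_trace_commutator_zero _ _ A B
    have htrA : (⁅A, B⁆ * A).trace = 0 := by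
      rw [trace_lie_mul, trace_mul_comm, trace_lie_mul, (Commute.refl A).lie_eq, mul_zero,
        trace_zero]
    have htrB : (⁅A, B⁆ * B).trace = 0 := by
      rw [trace_lie_mul, (Commute.refl B).lie_eq, mul_zero, trace_zero]
    obtain ⟨lam, hlam⟩ := exists_mulVec_eq_smul_of_trace_mul_eq_zero hdet htr htrA hz
    obtain ⟨mu, hmu⟩ := exists_mulVec_eq_smul_of_trace_mul_eq_zero hdet htr htrB hz
    exact ⟨_, hz, lam, mu, hlam, hmu⟩

end FinTwo

theorem common_eigenvector_iff_general {K : Type*} [Field K] [IsAlgClosed K]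
    (x y : Matrix (Fin 2) (Fin 2) K) :
    (∃ v : Fin 2 → K, v ≠ 0 ∧ ∃ lam mu : K, x *ᵥ v = lam • v ∧ y *ᵥ v = mu • v) ↔
    x.trace ^ 2 * y.det + y.trace ^ 2 * x.det + (x * y).trace ^ 2
      - x.trace * y.trace * (x * y).trace - 4 * (x.det * y.det) = 0 := by
  rw [← neg_eq_zero, ← det_lie_fin_two]
  exact hasCommonEigenvector_iff_det_lie_eq_zero

/-- two matrices `x, y ∈ SL(2,ℂ)` have a common eigenvector iff
`tr(x)² + tr(y)² + tr(xy)² − tr(x)·tr(y)·tr(xy) − 4 = 0`. -/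
theorem common_eigenvector_iff (x y : SL2C) :
    (∃ v : Fin 2 → ℂ, v ≠ 0 ∧ ∃ lam mu : ℂ,
        (x : Matrix (Fin 2) (Fin 2) ℂ).mulVec v = lam • v ∧
        (y : Matrix (Fin 2) (Fin 2) ℂ).mulVec v = mu • v) ↔
    tr2 x ^ 2 + tr2 y ^ 2 + tr2 (x * y) ^ 2
      - tr2 x * tr2 y * tr2 (x * y) - 4 = 0 := by
  simpa [tr2] using common_eigenvector_iff_general (x : Matrix (Fin 2) (Fin 2) ℂ) y
end
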